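/- arXiv:quant-ph/0608022 — 9 statements merged into one kernel-verified Lean document; each statement's English description precedes it below -/
import Mathlib

section
/- Let a, c, t be positive real numbers. Then the maximum of a·t₁ − a·c·t₁²/(c·t₁ + t₃) over all t₁, t₃ ≥ 0 with t₁ + t₃ = t equals a·t/(√c + 1)², and this maximum is attained at t₁ = t/(√c + 1), t₃ = √c·t/(√c + 1). -/
/-!
Write `c = s ^ 2`. Everything follows from the identity
`(x + z) * (s ^ 2 * x + z) - (s + 1) ^ 2 * (x * z) = (s * x - z) ^ 2`: it says that the value at
`(x, z)` falls short of `a * (x + z) / (s + 1) ^ 2` by a positive multiple of `(s * x - z) ^ 2`,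
so the bound is attained where the line `z = s * x` meets `x + z = t`.
-/

section Field

variable {K : Type*} [Field K]

/-- The objective `a·t₁ − a·c·t₁²/(c·t₁ + t₃)` of the maximization problem, with `x = t₁` and
`z = t₃`. It is meaningful for `c * x + z ≠ 0`; otherwise the division convention gives `a * x`. -/
def splitValue (a c x z : K) : K :=
  a * x - a * c * x ^ 2 / (c * x + z)

theorem splitValue_eq_mul_div {c x z : K} (a : K) (hd : c * x + z ≠ 0) :
    splitValue a c x z = a * (x * z) / (c * x + z) := by
  rw [splitValue, eq_div_iff hd, sub_mul, div_mul_cancel₀ _ hd]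
  ring

theorem mul_add_div_sq_sub_splitValue {s x z : K} (a : K) (hs : s + 1 ≠ 0)
    (hd : s ^ 2 * x + z ≠ 0) :
    a * (x + z) / (s + 1) ^ 2 - splitValue a (s ^ 2) x z =
      a * (s * x - z) ^ 2 / ((s + 1) ^ 2 * (s ^ 2 * x + z)) := by
  rw [splitValue_eq_mul_div a hd, div_sub_div _ _ (pow_ne_zero 2 hs) hd]
  congr 1
  ring

theorem splitValue_sq_of_eq_mul {s x z : K} (a : K) (hs : s + 1 ≠ 0)
    (hd : s ^ 2 * x + z ≠ 0) (hz : z = s * x) :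
    splitValue a (s ^ 2) x z = a * (x + z) / (s + 1) ^ 2 := by
  have gap := mul_add_div_sq_sub_splitValue a hs hd
  rw [sub_eq_zero.mpr hz.symm, zero_pow two_ne_zero, mul_zero, zero_div] at gap
  exact (sub_eq_zero.mp gap).symm

end Field

section OrderedField

variable {K : Type*} [Field K] [LinearOrder K] [IsStrictOrderedRing K]

theorem mul_add_pos_of_add_pos {c x z : K} (hc : 0 < c) (hx : 0 ≤ x) (hz : 0 ≤ z)
    (hxz : 0 < x + z) : 0 < c * x + z := by
  rcases hx.eq_or_lt with rfl | hx_pos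
  · simpa using hxz
  · positivity

theorem splitValue_sq_le {a s x z : K} (ha : 0 ≤ a) (hs : s + 1 ≠ 0)
    (hd : 0 < s ^ 2 * x + z) :
    splitValue a (s ^ 2) x z ≤ a * (x + z) / (s + 1) ^ 2 := by
  rw [← sub_nonneg, mul_add_div_sq_sub_splitValue a hs hd.ne']
  positivity

theorem stmt0_general {a s t : K} (ha : 0 ≤ a) (hs : 0 < s) (ht : 0 < t) :
    IsGreatest {y : K | ∃ t₁ t₃ : K, 0 ≤ t₁ ∧ 0 ≤ t₃ ∧ t₁ + t₃ = t ∧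
        y = splitValue a (s ^ 2) t₁ t₃}
      (a * t / (s + 1) ^ 2) ∧
    splitValue a (s ^ 2) (t / (s + 1)) (s * t / (s + 1)) = a * t / (s + 1) ^ 2 := by
  have hs1 : s + 1 ≠ 0 := by positivity
  have sum_eq : t / (s + 1) + s * t / (s + 1) = t := by
    field_simp
    ring
  have value_eq :
      splitValue a (s ^ 2) (t / (s + 1)) (s * t / (s + 1)) = a * t / (s + 1) ^ 2 := by
    rw [splitValue_sq_of_eq_mul a hs1 (by positivity) (mul_div_assoc s t (s + 1)), sum_eq]
  refine ⟨⟨⟨_, _, by positivity, by positivity, sum_eq, value_eq.symm⟩, ?_⟩, value_eq⟩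
  rintro _ ⟨x, z, hx, hz, rfl, rfl⟩
  exact splitValue_sq_le ha hs1 (mul_add_pos_of_add_pos (pow_pos hs 2) hx hz ht)

end OrderedField

/-- For positive reals `a`, `c`, `t`, the maximum of
`a·t₁ − a·c·t₁²/(c·t₁ + t₃)` over `t₁, t₃ ≥ 0` with `t₁ + t₃ = t` equals
`a·t/(√c + 1)²`, attained at `t₁ = t/(√c + 1)`, `t₃ = √c·t/(√c + 1)`. -/
theorem stmt0 (a c t : ℝ) (ha : 0 < a) (hc : 0 < c) (ht : 0 < t) :
    IsGreatest {y : ℝ | ∃ t₁ t₃ : ℝ, 0 ≤ t₁ ∧ 0 ≤ t₃ ∧ t₁ + t₃ = t ∧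
        y = a * t₁ - a * c * t₁ ^ 2 / (c * t₁ + t₃)}
      (a * t / (Real.sqrt c + 1) ^ 2) ∧
    a * (t / (Real.sqrt c + 1)) -
        a * c * (t / (Real.sqrt c + 1)) ^ 2 /
          (c * (t / (Real.sqrt c + 1)) + Real.sqrt c * t / (Real.sqrt c + 1)) =
      a * t / (Real.sqrt c + 1) ^ 2 := by
  simpa only [splitValue, Real.sq_sqrt hc.le] using
    stmt0_general ha.le (Real.sqrt_pos.mpr hc) ht
end

section
/- Let a, b, c, d, t be positive real numbers. Then the maximum of a·t₁ + b·t₂ − (√(a·c)·t₁ − √(b·d)·t₂)²/(c·t₁ + d·t₂) over all t₁, t₂ ≥ 0 with t₁ + t₂ = t equals t·(√(a·d) + √(b·c))²/(√c + √d)², and this maximum is attained at t₁ = t·√d/(√c + √d), t₂ = t·√c/(√c + √d). -/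
/-!
Write `a = p²`, `b = q²`, `c = r²`, `d = s²`. The objective is the Schur complement of the lower
right entry of the matrix `M = t₁ u uᵀ + t₂ v vᵀ` with `u = (p, r)` and `v = (q, -s)`, and
`det M = t₁ t₂ det(u, v)² = t₁ t₂ (p s + q r)²`. So it equals
`(p s + q r)² · t₁ t₂ / (r² t₁ + s² t₂)`. It remains to maximize `t₁ t₂ / (r² t₁ + s² t₂)`, which
falls short of `(t₁ + t₂) / (r + s)²` by a nonnegative multiple of `(r t₁ - s t₂)²`.
-/

theorem mul_add_mul_pos_of_add_pos {R : Type*} [Semiring R] [PartialOrder R]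
    [IsStrictOrderedRing R] {c d x y : R} (hc : 0 < c) (hd : 0 < d) (hx : 0 ≤ x) (hy : 0 ≤ y)
    (hxy : 0 < x + y) : 0 < c * x + d * y := by
  rcases hx.eq_or_lt with rfl | hx
  · simpa only [mul_zero, zero_add] using mul_pos hd (zero_add y ▸ hxy)
  · exact add_pos_of_pos_of_nonneg (mul_pos hc hx) (mul_nonneg hd.le hy)

section Field

variable {K : Type*} [Field K] {r s x y : K}

theorem add_sub_sq_div_eq_mul_div_mul_sq (p q : K) (hD : r ^ 2 * x + s ^ 2 * y ≠ 0) :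
    p ^ 2 * x + q ^ 2 * y - (p * r * x - q * s * y) ^ 2 / (r ^ 2 * x + s ^ 2 * y) =
      x * y / (r ^ 2 * x + s ^ 2 * y) * (p * s + q * r) ^ 2 := by
  rw [sub_div' hD, div_mul_eq_mul_div]
  congr 1
  ring

theorem add_div_sq_sub_mul_div (hrs : r + s ≠ 0) (hD : r ^ 2 * x + s ^ 2 * y ≠ 0) :
    (x + y) / (r + s) ^ 2 - x * y / (r ^ 2 * x + s ^ 2 * y) =
      (r * x - s * y) ^ 2 / ((r + s) ^ 2 * (r ^ 2 * x + s ^ 2 * y)) := by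
  rw [div_sub_div _ _ (pow_ne_zero 2 hrs) hD]
  congr 1
  ring

theorem mul_div_eq_add_div_sq (hrs : r + s ≠ 0) (hD : r ^ 2 * x + s ^ 2 * y ≠ 0)
    (h : r * x = s * y) :
    x * y / (r ^ 2 * x + s ^ 2 * y) = (x + y) / (r + s) ^ 2 := by
  have hgap := add_div_sq_sub_mul_div hrs hD
  rw [h, sub_self, zero_pow two_ne_zero, zero_div] at hgap
  exact (sub_eq_zero.mp hgap).symm

variable [LinearOrder K] [IsStrictOrderedRing K]

theorem mul_div_le_add_div_sq (hrs : r + s ≠ 0) (hD : 0 < r ^ 2 * x + s ^ 2 * y) :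
    x * y / (r ^ 2 * x + s ^ 2 * y) ≤ (x + y) / (r + s) ^ 2 := by
  rw [← sub_nonneg, add_div_sq_sub_mul_div hrs hD.ne']
  positivity

theorem stmt1_general (p q : K) {r s t : K} (hr : 0 < r) (hs : 0 < s) (ht : 0 < t) :
    IsGreatest {z : K | ∃ x y : K, 0 ≤ x ∧ 0 ≤ y ∧ x + y = t ∧
        z = p ^ 2 * x + q ^ 2 * y - (p * r * x - q * s * y) ^ 2 / (r ^ 2 * x + s ^ 2 * y)}
      (t * (p * s + q * r) ^ 2 / (r + s) ^ 2) ∧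
    p ^ 2 * (t * s / (r + s)) + q ^ 2 * (t * r / (r + s)) -
        (p * r * (t * s / (r + s)) - q * s * (t * r / (r + s))) ^ 2 /
          (r ^ 2 * (t * s / (r + s)) + s ^ 2 * (t * r / (r + s))) =
      t * (p * s + q * r) ^ 2 / (r + s) ^ 2 := by
  have hrs : r + s ≠ 0 := (add_pos hr hs).ne'
  have hsum : t * s / (r + s) + t * r / (r + s) = t := by
    rw [← add_div, ← mul_add, add_comm s, mul_div_cancel_right₀ t hrs]
  have hbalanced : r * (t * s / (r + s)) = s * (t * r / (r + s)) := by ring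
  have hD₀ : r ^ 2 * (t * s / (r + s)) + s ^ 2 * (t * r / (r + s)) ≠ 0 := by positivity
  have hvalue := add_sub_sq_div_eq_mul_div_mul_sq p q hD₀
  rw [mul_div_eq_add_div_sq hrs hD₀ hbalanced, hsum, div_mul_eq_mul_div] at hvalue
  refine ⟨⟨⟨_, _, by positivity, by positivity, hsum, hvalue.symm⟩, ?_⟩, hvalue⟩
  rintro _ ⟨x, y, hx, hy, rfl, rfl⟩
  have hD : 0 < r ^ 2 * x + s ^ 2 * y :=
    mul_add_mul_pos_of_add_pos (pow_pos hr 2) (pow_pos hs 2) hx hy ht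
  calc
    _ = x * y / (r ^ 2 * x + s ^ 2 * y) * (p * s + q * r) ^ 2 :=
      add_sub_sq_div_eq_mul_div_mul_sq p q hD.ne'
    _ ≤ (x + y) / (r + s) ^ 2 * (p * s + q * r) ^ 2 :=
      mul_le_mul_of_nonneg_right (mul_div_le_add_div_sq hrs hD) (sq_nonneg _)
    _ = (x + y) * (p * s + q * r) ^ 2 / (r + s) ^ 2 := div_mul_eq_mul_div ..

end Field

/-- For positive reals `a, b, c, d, t`, the maximum of
`a·t₁ + b·t₂ − (√(a·c)·t₁ − √(b·d)·t₂)²/(c·t₁ + d·t₂)` over `t₁, t₂ ≥ 0` with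
`t₁ + t₂ = t` equals `t·(√(a·d) + √(b·c))²/(√c + √d)²`, attained at
`t₁ = t·√d/(√c + √d)`, `t₂ = t·√c/(√c + √d)`. -/
theorem stmt1 (a b c d t : ℝ) (ha : 0 < a) (hb : 0 < b) (hc : 0 < c)
    (hd : 0 < d) (ht : 0 < t) :
    IsGreatest {y : ℝ | ∃ t₁ t₂ : ℝ, 0 ≤ t₁ ∧ 0 ≤ t₂ ∧ t₁ + t₂ = t ∧
        y = a * t₁ + b * t₂ -
          (Real.sqrt (a * c) * t₁ - Real.sqrt (b * d) * t₂) ^ 2 / (c * t₁ + d * t₂)}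
      (t * (Real.sqrt (a * d) + Real.sqrt (b * c)) ^ 2 /
        (Real.sqrt c + Real.sqrt d) ^ 2) ∧
    a * (t * Real.sqrt d / (Real.sqrt c + Real.sqrt d)) +
        b * (t * Real.sqrt c / (Real.sqrt c + Real.sqrt d)) -
        (Real.sqrt (a * c) * (t * Real.sqrt d / (Real.sqrt c + Real.sqrt d)) -
            Real.sqrt (b * d) * (t * Real.sqrt c / (Real.sqrt c + Real.sqrt d))) ^ 2 /
          (c * (t * Real.sqrt d / (Real.sqrt c + Real.sqrt d)) +
            d * (t * Real.sqrt c / (Real.sqrt c + Real.sqrt d))) =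
      t * (Real.sqrt (a * d) + Real.sqrt (b * c)) ^ 2 /
        (Real.sqrt c + Real.sqrt d) ^ 2 := by
  simpa only [Real.sq_sqrt, Real.sqrt_mul, ha.le, hb.le, hc.le, hd.le] using
    stmt1_general √a √b (Real.sqrt_pos.mpr hc) (Real.sqrt_pos.mpr hd) ht
end

section
/- Let a, b, c, d, t be positive real numbers, and define g(t₁, t₂, t₃) = a·t₁ + b·t₂ − (√(a·c)·t₁ − √(b·d)·t₂)²/(c·t₁ + d·t₂ + t₃) for t₁, t₂, t₃ ≥ 0 with t₁ + t₂ + t₃ = t (the denominator is strictly positive on this simplex). Then the supremum of g over the simplex {(t₁,t₂,t₃) : t₁,t₂,t₃ ≥ 0, t₁+t₂+t₃ = t} equals the maximum of the following three edge suprema: sup of g(t₁, 0, t₃) over t₁ + t₃ = t, sup of g(0, t₂, t₃) over t₂ + t₃ = t, and sup of g(t₁, t₂, 0) over t₁ + t₂ = t. -/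
/-- The function `g(t₁, t₂, t₃) = a·t₁ + b·t₂ − (√(a·c)·t₁ − √(b·d)·t₂)²/(c·t₁ + d·t₂ + t₃)`. -/
noncomputable def gFun (a b c d t₁ t₂ t₃ : ℝ) : ℝ :=
  a * t₁ + b * t₂ -
    (Real.sqrt (a * c) * t₁ - Real.sqrt (b * d) * t₂) ^ 2 / (c * t₁ + d * t₂ + t₃)

/-!
Freeze the ratio `k = q / m` of the linear form being squared to the denominator. On the slice of
the simplex where this ratio is `k`, the function `ℓ - q² / m` equals the linear form `ℓ - k² m`.
The slice is cut out of the simplex by one linear equation, so while a point of it has three nonzero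
coordinates, one can move inside the slice, without decreasing the linear form, until one of them
vanishes. Hence every point is dominated by a point of an edge.
-/

open Module
open scoped Matrix

theorem csSup_eq_max_max_of_forall_exists_le {α : Type*} [ConditionallyCompleteLinearOrder α]
    {A E₁ E₂ E₃ : Set α} (hA : BddAbove A) (hne₁ : E₁.Nonempty) (hne₂ : E₂.Nonempty)
    (hne₃ : E₃.Nonempty) (h₁ : E₁ ⊆ A) (h₂ : E₂ ⊆ A) (h₃ : E₃ ⊆ A)
    (hdom : ∀ x ∈ A, ∃ y ∈ E₁ ∪ E₂ ∪ E₃, x ≤ y) :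
    sSup A = max (max (sSup E₁) (sSup E₂)) (sSup E₃) := by
  rw [← csSup_union (hA.mono h₁) hne₁ (hA.mono h₂) hne₂,
    ← csSup_union (hA.mono (Set.union_subset h₁ h₂)) hne₁.inl (hA.mono h₃) hne₃]
  exact csSup_eq_csSup_of_forall_exists_le hdom fun y hy ↦
    ⟨y, Set.union_subset (Set.union_subset h₁ h₂) h₃ hy, le_rfl⟩

theorem exists_ne_zero_sum_smul_eq_zero_of_finrank_lt_ncard {ι R M : Type*} [Fintype ι]
    [DivisionRing R] [AddCommGroup M] [Module R M] [Module.Finite R M] (w : ι → M)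
    {S : Set ι} (hS : finrank R M < S.ncard) :
    ∃ v : ι → R, v ≠ 0 ∧ Function.support v ⊆ S ∧ ∑ i, v i • w i = 0 := by
  have hdep : ¬LinearIndepOn R w S := fun hind ↦ by
    have hle := hind.encard_le_toENat_rank
    rw [← finrank_eq_rank, Cardinal.toENat_nat, ← (Set.toFinite S).cast_ncard_eq] at hle
    exact hS.not_ge (by exact_mod_cast hle)
  rw [linearIndepOn_iff] at hdep
  push Not at hdep
  obtain ⟨v, hvS, hsum, hv⟩ := hdep
  refine ⟨v, fun h ↦ hv (DFunLike.coe_injective h), ?_, ?_⟩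
  · rwa [Finsupp.fun_support_eq]
  · rwa [Finsupp.linearCombination_apply, Finsupp.sum_fintype _ _ fun i ↦ zero_smul R (w i)] at hsum

/-- The dilated standard simplex: nonnegative vectors of total mass `t`. -/
def massSimplex (ι : Type*) {R : Type*} [Fintype ι] [AddCommMonoid R] [PartialOrder R] (t : R) :
    Set (ι → R) :=
  {p | 0 ≤ p ∧ ∑ i, p i = t}

theorem vec3_mem_massSimplex {R : Type*} [AddCommMonoid R] [PartialOrder R] {x y z t : R} :
    ![x, y, z] ∈ massSimplex (Fin 3) t ↔ 0 ≤ x ∧ 0 ≤ y ∧ 0 ≤ z ∧ x + y + z = t := by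
  simp [massSimplex, Pi.le_def, Fin.forall_fin_succ, Fin.sum_univ_three, and_assoc]

/-- The function `p ↦ ℓ(p) - q(p)² / m(p)` built from linear forms given by their coefficient
vectors; it models `gFun` in any number of variables. Where `m` vanishes the quotient is `0`. -/
def linSubSqDiv {ι 𝕜 : Type*} [Fintype ι] [Field 𝕜] (ℓ q m p : ι → 𝕜) : 𝕜 :=
  ℓ ⬝ᵥ p - (q ⬝ᵥ p) ^ 2 / (m ⬝ᵥ p)

theorem gFun_eq_linSubSqDiv (a b c d t₁ t₂ t₃ : ℝ) :
    gFun a b c d t₁ t₂ t₃ =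
      linSubSqDiv ![a, b, 0] ![√(a * c), -√(b * d), 0] ![c, d, 1] ![t₁, t₂, t₃] := by
  simp [gFun, linSubSqDiv, dotProduct, Fin.sum_univ_three, sub_eq_add_neg]

theorem linSubSqDiv_eq_dotProduct {ι 𝕜 : Type*} [Fintype ι] [Field 𝕜] (ℓ : ι → 𝕜)
    {q m p : ι → 𝕜} {k : 𝕜} (h : q ⬝ᵥ p = k * (m ⬝ᵥ p)) :
    linSubSqDiv ℓ q m p = (ℓ - k ^ 2 • m) ⬝ᵥ p := by
  rw [linSubSqDiv, h, mul_pow, sq (m ⬝ᵥ p), mul_div_assoc, mul_self_div_self, sub_dotProduct,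
    smul_dotProduct, smul_eq_mul]

section LinearOrderedField

variable {ι 𝕜 : Type*} [Field 𝕜] [LinearOrder 𝕜] [IsStrictOrderedRing 𝕜]

theorem exists_nonneg_add_smul_apply_eq_zero [Finite ι] {p v : ι → 𝕜} (hp : 0 ≤ p)
    (hv : ∃ i, v i < 0) : ∃ s : 𝕜, 0 ≤ s ∧ 0 ≤ p + s • v ∧ ∃ i, v i < 0 ∧ (p + s • v) i = 0 := by
  obtain ⟨i, hi : v i < 0, hmin⟩ :=
    Set.exists_min_image {i | v i < 0} (fun i ↦ p i / -v i) (Set.toFinite _) hv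
  have hs : 0 ≤ p i / -v i := div_nonneg (hp i) (neg_nonneg.2 hi.le)
  refine ⟨p i / -v i, hs, fun j ↦ ?_, i, hi, ?_⟩
  · simp only [Pi.zero_apply, Pi.add_apply, Pi.smul_apply, smul_eq_mul]
    rcases lt_or_ge (v j) 0 with hj | hj
    · have := (le_div_iff₀ (neg_pos.2 hj)).1 (hmin j hj)
      linarith
    · exact add_nonneg (hp j) (mul_nonneg hs hj)
  · simp only [Pi.add_apply, Pi.smul_apply, smul_eq_mul]
    field_simp [hi.ne]
    ring

variable [Fintype ι]

section Caratheodory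

variable {V : Type*} [AddCommGroup V] [Module 𝕜 V] [FiniteDimensional 𝕜 V]

theorem exists_neg_sum_smul_eq_zero_of_finrank_succ_lt_ncard (w : ι → V) (r : ι → 𝕜) {S : Set ι}
    (hS : finrank 𝕜 V + 1 < S.ncard) :
    ∃ v : ι → 𝕜, (∃ i, v i < 0) ∧ Function.support v ⊆ S ∧ ∑ i, v i = 0 ∧
      ∑ i, v i • w i = 0 ∧ 0 ≤ r ⬝ᵥ v := by
  obtain ⟨v, hv, hvS, hsum⟩ := exists_ne_zero_sum_smul_eq_zero_of_finrank_lt_ncard (R := 𝕜) (S := S)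
    (fun i ↦ ((1 : 𝕜), w i)) (by rwa [finrank_prod, finrank_self, add_comm])
  have hsum_one : ∑ i, v i = 0 := by simpa [Prod.fst_sum] using congrArg Prod.fst hsum
  have hsum_w : ∑ i, v i • w i = 0 := by simpa [Prod.snd_sum] using congrArg Prod.snd hsum
  obtain ⟨i, hi⟩ := Function.ne_iff.1 hv
  rcases le_total 0 (r ⬝ᵥ v) with hr | hr
  · obtain ⟨j, -, hj⟩ := Finset.exists_pos_of_sum_zero_of_exists_nonzero (s := Finset.univ) (-v)
      (by simpa using hsum_one) ⟨i, Finset.mem_univ i, by simpa using hi⟩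
    exact ⟨v, ⟨j, neg_pos.1 hj⟩, hvS, hsum_one, hsum_w, hr⟩
  · obtain ⟨j, -, hj⟩ := Finset.exists_pos_of_sum_zero_of_exists_nonzero (s := Finset.univ) v
      hsum_one ⟨i, Finset.mem_univ i, hi⟩
    exact ⟨-v, ⟨j, neg_neg_iff_pos.2 hj⟩, by rwa [Function.support_neg], by simpa using hsum_one,
      by simpa using hsum_w, by simpa using hr⟩

theorem exists_support_ssubset_dotProduct_le (w : ι → V) (r : ι → 𝕜) {p : ι → 𝕜} (hp : 0 ≤ p)
    (hcard : finrank 𝕜 V + 1 < (Function.support p).ncard) :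
    ∃ p' : ι → 𝕜, 0 ≤ p' ∧ ∑ i, p' i = ∑ i, p i ∧ ∑ i, p' i • w i = ∑ i, p i • w i ∧
      r ⬝ᵥ p ≤ r ⬝ᵥ p' ∧ Function.support p' ⊂ Function.support p := by
  obtain ⟨v, hneg, hvS, hsum_one, hsum_w, hr⟩ :=
    exists_neg_sum_smul_eq_zero_of_finrank_succ_lt_ncard w r hcard
  obtain ⟨s, hs, hp', i, hvi, hi⟩ := exists_nonneg_add_smul_apply_eq_zero hp hneg
  refine ⟨p + s • v, hp', ?_, ?_, ?_, ?_⟩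
  · simp [Finset.sum_add_distrib, ← Finset.mul_sum, hsum_one]
  · simp [add_smul, mul_smul, Finset.sum_add_distrib, ← Finset.smul_sum, hsum_w]
  · simpa [dotProduct_add] using mul_nonneg hs hr
  · refine (Set.ssubset_iff_of_subset fun j hj ↦ ?_).2 ⟨i, hvS hvi.ne, fun h ↦ h hi⟩
    by_contra hpj
    have hvj : v j = 0 := Function.notMem_support.1 fun h ↦ hpj (hvS h)
    exact hj (by simp [hvj, Function.notMem_support.1 hpj])

/- Carathéodory's theorem with an objective: sparsifying need not decrease the linear form `r`. -/
theorem exists_ncard_support_le_finrank_succ (w : ι → V) (r : ι → 𝕜) {p : ι → 𝕜} (hp : 0 ≤ p) :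
    ∃ p' : ι → 𝕜, 0 ≤ p' ∧ ∑ i, p' i = ∑ i, p i ∧ ∑ i, p' i • w i = ∑ i, p i • w i ∧
      r ⬝ᵥ p ≤ r ⬝ᵥ p' ∧ (Function.support p').ncard ≤ finrank 𝕜 V + 1 := by
  induction hn : (Function.support p).ncard using Nat.strong_induction_on generalizing p with
  | _ n ih =>
    rcases le_or_gt n (finrank 𝕜 V + 1) with hle | hlt
    · exact ⟨p, hp, rfl, rfl, le_rfl, hn.trans_le hle⟩
    · obtain ⟨p₁, hp₁, hone₁, hw₁, hr₁, hsupp⟩ :=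
        exists_support_ssubset_dotProduct_le w r hp (hn ▸ hlt)
      obtain ⟨p₂, hp₂, hone₂, hw₂, hr₂, hcard⟩ :=
        ih _ (hn ▸ Set.ncard_lt_ncard hsupp) hp₁ rfl
      exact ⟨p₂, hp₂, hone₂.trans hone₁, hw₂.trans hw₁, hr₁.trans hr₂, hcard⟩

end Caratheodory

theorem exists_ncard_support_le_two_linSubSqDiv_le (ℓ q : ι → 𝕜) {m p : ι → 𝕜} {t : 𝕜}
    (hm : m ⬝ᵥ p ≠ 0) (hp : p ∈ massSimplex ι t) :
    ∃ p' ∈ massSimplex ι t, (Function.support p').ncard ≤ 2 ∧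
      linSubSqDiv ℓ q m p ≤ linSubSqDiv ℓ q m p' := by
  set k : 𝕜 := (q ⬝ᵥ p) / (m ⬝ᵥ p)
  have hk : q ⬝ᵥ p = k * (m ⬝ᵥ p) := (div_mul_cancel₀ _ hm).symm
  obtain ⟨p', hp', hsum, hslice, hle, hcard⟩ :=
    exists_ncard_support_le_finrank_succ (q - k • m) (ℓ - k ^ 2 • m) hp.1
  have hk' : q ⬝ᵥ p' = k * (m ⬝ᵥ p') := by
    have : p' ⬝ᵥ (q - k • m) = p ⬝ᵥ (q - k • m) := hslice
    rw [dotProduct_comm p', dotProduct_comm p, sub_dotProduct, sub_dotProduct, smul_dotProduct,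
      smul_dotProduct, smul_eq_mul, smul_eq_mul, hk, sub_self, sub_eq_zero] at this
    exact this
  refine ⟨p', ⟨hp', hsum.trans hp.2⟩, by rwa [finrank_self] at hcard, ?_⟩
  rwa [linSubSqDiv_eq_dotProduct ℓ hk, linSubSqDiv_eq_dotProduct ℓ hk']

theorem dotProduct_pos_of_mem_massSimplex {m p : ι → 𝕜} {t : 𝕜} (hm : ∀ i, 0 < m i) (ht : 0 < t)
    (hp : p ∈ massSimplex ι t) : 0 < m ⬝ᵥ p := by
  obtain ⟨i, hi, hpi⟩ := Finset.exists_lt_of_sum_lt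
    (show ∑ i, (0 : ι → 𝕜) i < ∑ i, p i by simpa [hp.2] using ht)
  exact Finset.sum_pos' (fun j _ ↦ mul_nonneg (hm j).le (hp.1 j)) ⟨i, hi, mul_pos (hm i) hpi⟩

theorem bddAbove_linSubSqDiv_image_massSimplex (ℓ q : ι → 𝕜) {m : ι → 𝕜} (hm : 0 ≤ m) (t : 𝕜) :
    BddAbove (linSubSqDiv ℓ q m '' massSimplex ι t) := by
  obtain ⟨M, hM⟩ := (Set.finite_range ℓ).bddAbove
  refine ⟨M * t, ?_⟩
  rintro _ ⟨p, ⟨hp, hsum⟩, rfl⟩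
  calc linSubSqDiv ℓ q m p
      ≤ ℓ ⬝ᵥ p := sub_le_self _ (div_nonneg (sq_nonneg _) (dotProduct_nonneg_of_nonneg hm hp))
    _ ≤ (fun _ ↦ M) ⬝ᵥ p :=
        dotProduct_le_dotProduct_of_nonneg_right (fun i ↦ hM (Set.mem_range_self i)) hp
    _ = M * t := by rw [← hsum, dotProduct, Finset.mul_sum]

theorem exists_eq_zero_linSubSqDiv_le (ℓ q : Fin 3 → 𝕜) {m p : Fin 3 → 𝕜} {t : 𝕜}
    (hm : m ⬝ᵥ p ≠ 0) (hp : p ∈ massSimplex (Fin 3) t) :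
    ∃ p' ∈ massSimplex (Fin 3) t, (∃ i, p' i = 0) ∧
      linSubSqDiv ℓ q m p ≤ linSubSqDiv ℓ q m p' := by
  obtain ⟨p', hp', hcard, hle⟩ := exists_ncard_support_le_two_linSubSqDiv_le ℓ q hm hp
  refine ⟨p', hp', ?_, hle⟩
  by_contra! hne
  have hsupp : Function.support p' = Set.univ := Set.eq_univ_of_forall hne
  simp [hsupp, Set.ncard_univ] at hcard

end LinearOrderedField

theorem stmt2_general (ℓ q m : Fin 3 → ℝ) (t : ℝ) (hm : ∀ i, 0 < m i) (ht : 0 < t) :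
    sSup {y : ℝ | ∃ t₁ t₂ t₃ : ℝ, 0 ≤ t₁ ∧ 0 ≤ t₂ ∧ 0 ≤ t₃ ∧ t₁ + t₂ + t₃ = t ∧
        y = linSubSqDiv ℓ q m ![t₁, t₂, t₃]} =
      max (max
        (sSup {y : ℝ | ∃ t₁ t₃ : ℝ, 0 ≤ t₁ ∧ 0 ≤ t₃ ∧ t₁ + t₃ = t ∧
          y = linSubSqDiv ℓ q m ![t₁, 0, t₃]})
        (sSup {y : ℝ | ∃ t₂ t₃ : ℝ, 0 ≤ t₂ ∧ 0 ≤ t₃ ∧ t₂ + t₃ = t ∧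
          y = linSubSqDiv ℓ q m ![0, t₂, t₃]}))
        (sSup {y : ℝ | ∃ t₁ t₂ : ℝ, 0 ≤ t₁ ∧ 0 ≤ t₂ ∧ t₁ + t₂ = t ∧
          y = linSubSqDiv ℓ q m ![t₁, t₂, 0]}) := by
  apply csSup_eq_max_max_of_forall_exists_le
  · refine (bddAbove_linSubSqDiv_image_massSimplex ℓ q (fun i ↦ (hm i).le) t).mono ?_
    rintro _ ⟨x, y, z, hx, hy, hz, hsum, rfl⟩
    exact ⟨_, vec3_mem_massSimplex.2 ⟨hx, hy, hz, hsum⟩, rfl⟩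
  iterate 3 exact ⟨_, t, 0, ht.le, le_rfl, add_zero t, rfl⟩
  · rintro _ ⟨x, z, hx, hz, hsum, rfl⟩
    exact ⟨x, 0, z, hx, le_rfl, hz, by rwa [add_zero], rfl⟩
  · rintro _ ⟨y, z, hy, hz, hsum, rfl⟩
    exact ⟨0, y, z, le_rfl, hy, hz, by rwa [zero_add], rfl⟩
  · rintro _ ⟨x, y, hx, hy, hsum, rfl⟩
    exact ⟨x, y, 0, hx, hy, le_rfl, by rwa [add_zero], rfl⟩
  · rintro _ ⟨x, y, z, hx, hy, hz, hsum, rfl⟩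
    have hp := vec3_mem_massSimplex.2 ⟨hx, hy, hz, hsum⟩
    obtain ⟨p, hp', ⟨i, hi⟩, hle⟩ :=
      exists_eq_zero_linSubSqDiv_le ℓ q (dotProduct_pos_of_mem_massSimplex hm ht hp).ne' hp
    refine ⟨_, ?_, hle⟩
    obtain ⟨x', y', z', rfl⟩ : ∃ x' y' z', p = ![x', y', z'] :=
      ⟨p 0, p 1, p 2, List.ofFn_inj.1 rfl⟩
    obtain ⟨hx', hy', hz', hsum'⟩ := vec3_mem_massSimplex.1 hp'
    fin_cases i
    · obtain rfl : x' = 0 := hi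
      exact .inl (.inr ⟨y', z', hy', hz', by rwa [zero_add] at hsum', rfl⟩)
    · obtain rfl : y' = 0 := hi
      exact .inl (.inl ⟨x', z', hx', hz', by rwa [add_zero] at hsum', rfl⟩)
    · obtain rfl : z' = 0 := hi
      exact .inr ⟨x', y', hx', hy', by rwa [add_zero] at hsum', rfl⟩

/-- For positive reals `a, b, c, d, t`, the supremum of `g` over the simplex
`{(t₁,t₂,t₃) : t₁,t₂,t₃ ≥ 0, t₁+t₂+t₃ = t}` equals the maximum of the suprema of `g` over
the three edges `t₂ = 0`, `t₁ = 0` and `t₃ = 0`. -/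
theorem stmt2 (a b c d t : ℝ) (ha : 0 < a) (hb : 0 < b) (hc : 0 < c)
    (hd : 0 < d) (ht : 0 < t) :
    sSup {y : ℝ | ∃ t₁ t₂ t₃ : ℝ, 0 ≤ t₁ ∧ 0 ≤ t₂ ∧ 0 ≤ t₃ ∧ t₁ + t₂ + t₃ = t ∧
        y = gFun a b c d t₁ t₂ t₃} =
      max (max
        (sSup {y : ℝ | ∃ t₁ t₃ : ℝ, 0 ≤ t₁ ∧ 0 ≤ t₃ ∧ t₁ + t₃ = t ∧
          y = gFun a b c d t₁ 0 t₃})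
        (sSup {y : ℝ | ∃ t₂ t₃ : ℝ, 0 ≤ t₂ ∧ 0 ≤ t₃ ∧ t₂ + t₃ = t ∧
          y = gFun a b c d 0 t₂ t₃}))
        (sSup {y : ℝ | ∃ t₁ t₂ : ℝ, 0 ≤ t₁ ∧ 0 ≤ t₂ ∧ t₁ + t₂ = t ∧
          y = gFun a b c d t₁ t₂ 0}) := by
  simp only [gFun_eq_linSubSqDiv]
  exact stmt2_general _ _ _ t (by simp [Fin.forall_fin_succ, hc, hd]) ht
end

section
/- Let α, β be real numbers and let C be a nonempty compact convex subset of ℝ² contained in the open half-plane {(x, y) : x > 0}. Define f(x, y) = −(y − α·x)²/x + β·x. Then the maximum of f over C is attained at some point of the topological frontier of C; that is, there exists z in the frontier of C such that f(w) ≤ f(z) for all w ∈ C. -/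
/-!
The function `f` is positively homogeneous of degree one, so along the ray `t ↦ t • x` it equals
`t * f x`. If `0 ≤ f x`, moving outward does not decrease `f`, and the ray must leave the bounded
set `C`; if `f x ≤ 0`, moving inward does not decrease `f`, and the ray must leave the closed
set `C` before reaching the origin. Either way it crosses the frontier at a value at least `f x`;
apply this to a maximizer `x`.
-/

open Set Filter Bornology

theorem inter_frontier_nonempty_of_isPreconnected {X : Type*} [TopologicalSpace X] {s u : Set X}
    (hs : IsPreconnected s) (hsu : (s ∩ u).Nonempty) (hsu' : (s \ u).Nonempty) :
    (s ∩ frontier u).Nonempty := by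
  by_contra! hfr
  have hint : s ∩ closure u ⊆ interior u := fun x ⟨hxs, hxc⟩ ↦
    by_contra fun hxi ↦ hfr.subset ⟨hxs, hxc, hxi⟩
  obtain ⟨x, hxs, hxu⟩ := hsu
  obtain ⟨y, hys, hyu⟩ := hsu'
  have hsub : s ⊆ interior u := hs.subset_of_closure_inter_subset isOpen_interior
    ⟨x, hxs, hint ⟨hxs, subset_closure hxu⟩⟩
    fun z ⟨hzc, hzs⟩ ↦ hint ⟨hzs, closure_mono interior_subset hzc⟩
  exact hyu (interior_subset (hsub hys))

section Ray

variable {E : Type*} [AddCommGroup E] [Module ℝ E] [TopologicalSpace E] [ContinuousSMul ℝ E]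
  {C : Set E} {x : E}

theorem exists_smul_mem_frontier_of_isPreconnected {I : Set ℝ} (hI : IsPreconnected I)
    {a b : ℝ} (ha : a ∈ I) (hb : b ∈ I) (hax : a • x ∈ C) (hbx : b • x ∉ C) :
    ∃ t ∈ I, t • x ∈ frontier C := by
  have hray : IsPreconnected ((fun t : ℝ ↦ t • x) '' I) := hI.image _ (by fun_prop)
  obtain ⟨_, ⟨t, ht, rfl⟩, htx⟩ := inter_frontier_nonempty_of_isPreconnected hray
    ⟨_, mem_image_of_mem _ ha, hax⟩ ⟨_, mem_image_of_mem _ hb, hbx⟩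
  exact ⟨t, ht, htx⟩

theorem exists_one_le_smul_mem_frontier [T1Space E] (hC : IsVonNBounded ℝ C) (hx : x ∈ C)
    (hx0 : x ≠ 0) : ∃ t : ℝ, 1 ≤ t ∧ t • x ∈ frontier C := by
  have habs : Absorbs ℝ {x}ᶜ C := hC (isOpen_compl_singleton.mem_nhds hx0.symm)
  have hmaps : ∀ᶠ t : ℝ in atTop, MapsTo (t⁻¹ • ·) C {x}ᶜ :=
    IsOrderBornology.atTop_le_cobounded (absorbs_iff_eventually_cobounded_mapsTo.1 habs)
  obtain ⟨b, hb, hb1⟩ := (hmaps.and (eventually_ge_atTop 1)).exists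
  have hbx : b • x ∉ C := fun h ↦ hb h (inv_smul_smul₀ (by positivity) x)
  exact exists_smul_mem_frontier_of_isPreconnected isPreconnected_Ici self_mem_Ici hb1
    (by rwa [one_smul]) hbx

theorem exists_smul_mem_frontier_of_zero_notMem (hC : IsClosed C) (hx : x ∈ C)
    (h0 : (0 : E) ∉ C) : ∃ t : ℝ, 0 < t ∧ t ≤ 1 ∧ t • x ∈ frontier C := by
  obtain ⟨t, ⟨ht0, ht1⟩, htx⟩ := exists_smul_mem_frontier_of_isPreconnected
    (isPreconnected_Icc (a := (0 : ℝ)) (b := 1)) (right_mem_Icc.2 zero_le_one)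
    (left_mem_Icc.2 zero_le_one) (by rwa [one_smul]) (by rwa [zero_smul])
  have ht : t ≠ 0 := by
    rintro rfl
    exact h0 (hC.frontier_subset (zero_smul ℝ x ▸ htx))
  exact ⟨t, ht0.lt_of_ne' ht, ht1, htx⟩

theorem exists_mem_frontier_ge_of_posHomogeneous [T1Space E] (hC : IsClosed C)
    (hCb : IsVonNBounded ℝ C) (h0 : (0 : E) ∉ C) {f : E → ℝ} (hx : x ∈ C)
    (hf : ∀ t : ℝ, 0 < t → f (t • x) = t * f x) : ∃ z ∈ frontier C, f x ≤ f z := by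
  rcases le_total 0 (f x) with hfx | hfx
  · obtain ⟨t, ht, htx⟩ := exists_one_le_smul_mem_frontier hCb hx (ne_of_mem_of_not_mem hx h0)
    refine ⟨t • x, htx, ?_⟩
    rw [hf t (by positivity)]
    exact le_mul_of_one_le_left hfx ht
  · obtain ⟨t, ht, ht1, htx⟩ := exists_smul_mem_frontier_of_zero_notMem hC hx h0
    refine ⟨t • x, htx, ?_⟩
    rw [hf t ht]
    exact le_mul_of_le_one_left hfx ht1

theorem exists_mem_frontier_isMaxOn_of_posHomogeneous [IsTopologicalAddGroup E] [T1Space E]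
    (hC : IsCompact C) (hne : C.Nonempty) (h0 : (0 : E) ∉ C) {f : E → ℝ} (hfc : ContinuousOn f C)
    (hf : ∀ x ∈ C, ∀ t : ℝ, 0 < t → f (t • x) = t * f x) :
    ∃ z ∈ frontier C, IsMaxOn f C z := by
  obtain ⟨m, hm, hmax⟩ := hC.exists_isMaxOn hne hfc
  obtain ⟨z, hz, hmz⟩ :=
    exists_mem_frontier_ge_of_posHomogeneous hC.isClosed (hC.isVonNBounded ℝ) h0 hm (hf m hm)
  exact ⟨z, hz, fun w hw ↦ (hmax hw).trans hmz⟩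

end Ray

theorem stmt3_general (α β : ℝ) (C : Set (ℝ × ℝ)) (hne : C.Nonempty)
    (hcomp : IsCompact C) (hpos : ∀ p ∈ C, 0 < p.1) :
    ∃ z ∈ frontier C, ∀ w ∈ C,
      -(w.2 - α * w.1) ^ 2 / w.1 + β * w.1 ≤ -(z.2 - α * z.1) ^ 2 / z.1 + β * z.1 := by
  have hpos' : ∀ p ∈ C, p.1 ≠ 0 := fun p hp ↦ (hpos p hp).ne'
  refine exists_mem_frontier_isMaxOn_of_posHomogeneous
    (f := fun p ↦ -(p.2 - α * p.1) ^ 2 / p.1 + β * p.1) hcomp hne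
    (fun h ↦ hpos' 0 h rfl) (by fun_prop (disch := assumption)) fun p hp t ht ↦ ?_
  have hp1 := hpos' p hp
  simp only [Prod.smul_fst, Prod.smul_snd, smul_eq_mul]
  field_simp

/-- Let `C ⊆ ℝ²` be a nonempty compact convex set contained in the open
half-plane `{(x,y) : x > 0}`, and let `f(x,y) = −(y − α·x)²/x + β·x`. Then the maximum of `f`
over `C` is attained at some point of the topological frontier of `C`. -/
theorem stmt3 (α β : ℝ) (C : Set (ℝ × ℝ)) (hne : C.Nonempty)
    (hcomp : IsCompact C) (hconv : Convex ℝ C) (hpos : ∀ p ∈ C, 0 < p.1) :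
    ∃ z ∈ frontier C, ∀ w ∈ C,
      -(w.2 - α * w.1) ^ 2 / w.1 + β * w.1 ≤ -(z.2 - α * z.1) ^ 2 / z.1 + β * z.1 :=
  stmt3_general α β C hne hcomp hpos
end

section
/- Let λ > 0, δ ≥ 0 and F ∈ [0,1] be real numbers. Then √(3/2)·((2F+1)·√λ + √(6·(λ·(2F+1) + 6δ))) > (2F+1)·√(λ·(2−2F) + 6δ) + (2−2F)·√(λ·(2F+1) + 6δ). -/
/-!
Put `a = λ(2F + 1) + 6δ` and `b = λ(2 - 2F) + 6δ`. Since `√(3/2) · √(6a) = 3√a` and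
`3 = (2F + 1) + (2 - 2F)`, cancelling `(2 - 2F)√a` and dividing by `2F + 1` reduces the claim to
`√b < √(3λ/2) + √a`. By subadditivity of the square root it is enough that `b < 3λ/2 + a`, that is,
`-1/8 < F`.
-/

theorem sqrt_add_le_add_sqrt {x y : ℝ} (hx : 0 ≤ x) (hy : 0 ≤ y) : √(x + y) ≤ √x + √y := by
  rw [Real.sqrt_le_left (by positivity), add_sq, Real.sq_sqrt hx, Real.sq_sqrt hy]
  linarith [mul_nonneg (Real.sqrt_nonneg x) (Real.sqrt_nonneg y)]

theorem sqrt_lt_sqrt_add_sqrt {x y z : ℝ} (hx : 0 ≤ x) (hy : 0 ≤ y) (hz : 0 ≤ z)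
    (h : z < x + y) : √z < √x + √y :=
  (Real.sqrt_lt_sqrt hz h).trans_le (sqrt_add_le_add_sqrt hx hy)

theorem mul_sqrt_add_mul_sqrt_lt {x y z p : ℝ} (q : ℝ) (hx : 0 ≤ x) (hy : 0 ≤ y) (hz : 0 ≤ z)
    (hp : 0 < p) (h : z < x + y) : p * √z + q * √y < p * √x + (p + q) * √y :=
  calc
    p * √z + q * √y < p * (√x + √y) + q * √y := by
      gcongr
      exact sqrt_lt_sqrt_add_sqrt hx hy hz h
    _ = p * √x + (p + q) * √y := by ring

theorem sqrt_mul_mul_sqrt_add_sqrt {c : ℝ} (hc : 0 ≤ c) (p x y : ℝ) :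
    √c * (p * √x + √(4 * c * y)) = p * √(c * x) + 2 * c * √y := by
  have hy : √c * √(4 * c * y) = 2 * c * √y := by
    rw [← Real.sqrt_mul hc, show c * (4 * c * y) = (2 * c) ^ 2 * y by ring,
      Real.sqrt_mul (sq_nonneg _), Real.sqrt_sq (by positivity)]
  rw [mul_add, hy, mul_left_comm, ← Real.sqrt_mul hc]

theorem stmt5_general {lam δ F : ℝ} (hlam : 0 < lam) (hF : -(1 / 8) < F)
    (hcoinc : 0 ≤ lam * (2 * F + 1) + 6 * δ) (hanti : 0 ≤ lam * (2 - 2 * F) + 6 * δ) :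
    (2 * F + 1) * √(lam * (2 - 2 * F) + 6 * δ) + (2 - 2 * F) * √(lam * (2 * F + 1) + 6 * δ) <
      √(3 / 2) * ((2 * F + 1) * √lam + √(6 * (lam * (2 * F + 1) + 6 * δ))) := by
  have hgap : lam * (2 - 2 * F) + 6 * δ < 3 / 2 * lam + (lam * (2 * F + 1) + 6 * δ) := by
    linarith [mul_lt_mul_of_pos_left hF hlam]
  calc
    _ < (2 * F + 1) * √(3 / 2 * lam) +
          (2 * F + 1 + (2 - 2 * F)) * √(lam * (2 * F + 1) + 6 * δ) :=
      mul_sqrt_add_mul_sqrt_lt _ (by positivity) hcoinc hanti (by linarith) hgap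
    _ = (2 * F + 1) * √(3 / 2 * lam) + 2 * (3 / 2) * √(lam * (2 * F + 1) + 6 * δ) := by ring
    _ = √(3 / 2) * ((2 * F + 1) * √lam + √(4 * (3 / 2) * (lam * (2 * F + 1) + 6 * δ))) :=
      (sqrt_mul_mul_sqrt_add_sqrt (by norm_num) _ _ _).symm
    _ = _ := by norm_num

/-- For `λ > 0`, `δ ≥ 0` and fidelity `F ∈ [0,1]`,
`√(3/2)·((2F+1)·√λ + √(6·(λ·(2F+1) + 6δ)))
  > (2F+1)·√(λ·(2−2F) + 6δ) + (2−2F)·√(λ·(2F+1) + 6δ)`. -/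
theorem stmt5 (lam δ F : ℝ) (hlam : 0 < lam) (hδ : 0 ≤ δ)
    (hF : F ∈ Set.Icc (0 : ℝ) 1) :
    Real.sqrt (3 / 2) *
        ((2 * F + 1) * Real.sqrt lam + Real.sqrt (6 * (lam * (2 * F + 1) + 6 * δ))) >
      (2 * F + 1) * Real.sqrt (lam * (2 - 2 * F) + 6 * δ) +
        (2 - 2 * F) * Real.sqrt (lam * (2 * F + 1) + 6 * δ) := by
  obtain ⟨hF₀, hF₁⟩ := hF
  have hF₂ : 0 ≤ 2 - 2 * F := by linarith
  exact stmt5_general hlam (by linarith) (by positivity) (by positivity)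
end

section
/- Let δ′ ≥ 0 be a real number and consider h(F) = √(3/2) + √((2−2F) + δ′) − √((2F+1) + δ′) for F ∈ [0,1]. If δ′ ≤ 3/8, then there exists a unique F* ∈ [0,1] satisfying √((2F*+1) + δ′) − √((2−2F*) + δ′) = √(3/2), and for every F ∈ [0,1] one has h(F) > 0 if and only if F < F*. If δ′ > 3/8, then h(F) > 0 for every F ∈ [0,1]. -/
/-!
The condition `h(F) > 0` says that `√((2F+1) + δ′) − √((2−2F) + δ′)` lies below `√(3/2)`.
This difference of square roots is continuous and strictly increasing in `F`, and it is nonpositive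
at `F = 0`, so everything depends on whether it reaches `√(3/2)` at `F = 1`, that is, on whether
`√(3/2) ≤ √(3 + δ′) − √δ′`. Squaring twice turns this into `4 · (3/2) · δ′ ≤ (3 − 3/2)²`, i.e.
`δ′ ≤ 3/8`.
-/

theorem sqrt_le_sqrt_add_sub_sqrt_iff {a c δ : ℝ} (hc : 0 ≤ c) (hca : c ≤ a) (hδ : 0 ≤ δ) :
    √c ≤ √(a + δ) - √δ ↔ 4 * c * δ ≤ (a - c) ^ 2 := by
  have sq_sum : (√c + √δ) ^ 2 = c + 2 * √(c * δ) + δ := by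
    rw [add_sq, Real.sq_sqrt hc, Real.sq_sqrt hδ, Real.sqrt_mul hc, mul_assoc]
  calc √c ≤ √(a + δ) - √δ
      ↔ √c + √δ ≤ √(a + δ) := le_sub_iff_add_le
    _ ↔ (√c + √δ) ^ 2 ≤ a + δ := Real.le_sqrt (by positivity) (by linarith)
    _ ↔ √(c * δ) ≤ (a - c) / 2 := by rw [sq_sum]; constructor <;> intro h <;> linarith
    _ ↔ c * δ ≤ ((a - c) / 2) ^ 2 := Real.sqrt_le_left (by linarith)
    _ ↔ 4 * c * δ ≤ (a - c) ^ 2 := by constructor <;> intro h <;> linarith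

/-- The difference of the square roots of the coincidence rate and the anti-coincidence rate at
fidelity `F`, both in units of `λ/6`, with normalized dark count `δ`. The function `h` of the
theorem is `√(3/2) - sqrtRateGap δ′`. -/
noncomputable def sqrtRateGap (δ F : ℝ) : ℝ :=
  √((2 * F + 1) + δ) - √((2 - 2 * F) + δ)

theorem continuous_sqrtRateGap (δ : ℝ) : Continuous (sqrtRateGap δ) := by
  unfold sqrtRateGap
  fun_prop

theorem strictMonoOn_sqrtRateGap (δ : ℝ) :
    StrictMonoOn (sqrtRateGap δ) (Set.Icc (-(1 + δ) / 2) ((2 + δ) / 2)) := by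
  intro F₁ h₁ F₂ h₂ hlt
  have coincidence_lt : √((2 * F₁ + 1) + δ) < √((2 * F₂ + 1) + δ) :=
    Real.sqrt_lt_sqrt (by linarith [h₁.1]) (by linarith)
  have antiCoincidence_lt : √((2 - 2 * F₂) + δ) < √((2 - 2 * F₁) + δ) :=
    Real.sqrt_lt_sqrt (by linarith [h₂.2]) (by linarith)
  exact sub_lt_sub coincidence_lt antiCoincidence_lt

theorem sqrtRateGap_nonpos {F : ℝ} (δ : ℝ) (hF : F ≤ 1 / 4) : sqrtRateGap δ F ≤ 0 :=
  sub_nonpos.mpr (Real.sqrt_le_sqrt (by linarith))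

theorem sqrt_three_halves_le_sqrtRateGap_one_iff {δ : ℝ} (hδ : 0 ≤ δ) :
    √(3 / 2) ≤ sqrtRateGap δ 1 ↔ δ ≤ 3 / 8 := by
  have gap_one : sqrtRateGap δ 1 = √(3 + δ) - √δ := by
    norm_num [sqrtRateGap]
  rw [gap_one, sqrt_le_sqrt_add_sub_sqrt_iff (by norm_num) (by norm_num) hδ]
  constructor <;> intro h <;> linarith

/-- For normalized dark count `δ′ ≥ 0`, set
`h(F) = √(3/2) + √((2−2F) + δ′) − √((2F+1) + δ′)` on `[0,1]`.
If `δ′ ≤ 3/8` there is a unique critical fidelity `F* ∈ [0,1]` with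
`√((2F*+1) + δ′) − √((2−2F*) + δ′) = √(3/2)`, and `h(F) > 0 ↔ F < F*` on `[0,1]`.
If `δ′ > 3/8` then `h > 0` on all of `[0,1]`. -/
theorem stmt6 (δ' : ℝ) (hδ' : 0 ≤ δ') :
    (δ' ≤ 3 / 8 →
      ∃ Fs : ℝ, Fs ∈ Set.Icc (0 : ℝ) 1 ∧
        Real.sqrt ((2 * Fs + 1) + δ') - Real.sqrt ((2 - 2 * Fs) + δ') = Real.sqrt (3 / 2) ∧
        (∀ F ∈ Set.Icc (0 : ℝ) 1,
          Real.sqrt ((2 * F + 1) + δ') - Real.sqrt ((2 - 2 * F) + δ') = Real.sqrt (3 / 2) →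
            F = Fs) ∧
        (∀ F ∈ Set.Icc (0 : ℝ) 1,
          (0 < Real.sqrt (3 / 2) + Real.sqrt ((2 - 2 * F) + δ') -
              Real.sqrt ((2 * F + 1) + δ') ↔ F < Fs))) ∧
    (3 / 8 < δ' →
      ∀ F ∈ Set.Icc (0 : ℝ) 1,
        0 < Real.sqrt (3 / 2) + Real.sqrt ((2 - 2 * F) + δ') -
          Real.sqrt ((2 * F + 1) + δ')) := by
  have pos_iff (F : ℝ) : 0 < √(3 / 2) + √((2 - 2 * F) + δ') - √((2 * F + 1) + δ') ↔
      sqrtRateGap δ' F < √(3 / 2) :=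
    sub_pos.trans sub_lt_iff_lt_add.symm
  have strictMonoOn_gap : StrictMonoOn (sqrtRateGap δ') (Set.Icc 0 1) :=
    (strictMonoOn_sqrtRateGap δ').mono (Set.Icc_subset_Icc (by linarith) (by linarith))
  simp only [pos_iff]
  constructor
  · intro hle
    have gap_zero_le : sqrtRateGap δ' 0 ≤ √(3 / 2) :=
      (sqrtRateGap_nonpos δ' (by norm_num)).trans (Real.sqrt_nonneg _)
    have le_gap_one : √(3 / 2) ≤ sqrtRateGap δ' 1 :=
      (sqrt_three_halves_le_sqrtRateGap_one_iff hδ').mpr hle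
    obtain ⟨Fs, hFs, gap_Fs⟩ := intermediate_value_Icc zero_le_one
      (continuous_sqrtRateGap δ').continuousOn ⟨gap_zero_le, le_gap_one⟩
    refine ⟨Fs, hFs, gap_Fs, fun F hF gap_F => ?_, fun F hF => ?_⟩
    · exact strictMonoOn_gap.injOn hF hFs (gap_F.trans gap_Fs.symm)
    · rw [← gap_Fs, strictMonoOn_gap.lt_iff_lt hF hFs]
  · intro hlt F hF
    have gap_one_lt : sqrtRateGap δ' 1 < √(3 / 2) := by
      rwa [← not_le, sqrt_three_halves_le_sqrtRateGap_one_iff hδ', not_le]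
    exact (strictMonoOn_gap.monotoneOn hF (Set.right_mem_Icc.mpr zero_le_one) hF.2).trans_lt
      gap_one_lt
end

section
/- Let m be a positive integer, let w : {1,…,m} → (0,∞), set w_M = maxⱼ wⱼ, let c₀ > 0, fix an index i, and let a > 0 satisfy wᵢ·a < c₀. Then the infimum, over all μ′ : {1,…,m} → [0,∞) with μ′ᵢ > 0 and Σⱼ wⱼ·μ′ⱼ = c₀, of Σⱼ μ′ⱼ − a + a·log(a/μ′ᵢ) equals c₀/wᵢ − a + a·log(a·wᵢ/c₀) if a ≥ c₀·(w_M − wᵢ)/(w_M·wᵢ), and equals c₀/w_M + a·log((w_M − wᵢ)/w_M) if a < c₀·(w_M − wᵢ)/(w_M·wᵢ); moreover this infimum is attained. -/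
/-!
On the hyperplane `∑ j, w j * μ j = c`, mass outside coordinate `i` is cheapest when it all sits
where `w` is maximal. Minimizing over the other coordinates with `μ i = x` fixed therefore leaves
the problem of minimizing `c / w_M + θ * x - a + a * log (a / x)` over `0 < x ≤ c / w i`, where
`θ = (w_M - w i) / w_M`. This convex function of `x` decreases as long as `θ * x ≤ a`. If
`θ * (c / w i) ≤ a`, the minimizer is therefore the endpoint `c / w i`; otherwise it is the
stationary point `a / θ`.
-/

section WeightedPoissonKL

open Set

variable {a θ s t T : ℝ}

/-- The Kullback–Leibler divergence `D(Poi(a)‖Poi(x)) = x - a + a * log (a / x)` with its linear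
term `x` weighted by `θ`. It is the objective that remains once only one intensity is free. -/
noncomputable def weightedPoissonKL (a θ x : ℝ) : ℝ :=
  θ * x - a + a * Real.log (a / x)

theorem weightedPoissonKL_div_self (ha : a ≠ 0) (hθ : θ ≠ 0) :
    weightedPoissonKL a θ (a / θ) = a * Real.log θ := by
  rw [weightedPoissonKL, div_div_cancel₀ ha, mul_div_cancel₀ a hθ, sub_self, zero_add]

theorem weightedPoissonKL_tangent_le (ha : 0 < a) (hs : 0 < s) (ht : 0 < t) :
    weightedPoissonKL a θ s + (θ - a / s) * (t - s) ≤ weightedPoissonKL a θ t := by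
  have hlog : a * Real.log (t / s) ≤ a * (t / s - 1) :=
    mul_le_mul_of_nonneg_left (Real.log_le_sub_one_of_pos (div_pos ht hs)) ha.le
  have hslope : a / s * (t - s) = a * (t / s - 1) := by field_simp
  simp only [weightedPoissonKL]
  rw [Real.log_div ht.ne' hs.ne'] at hlog
  rw [Real.log_div ha.ne' hs.ne', Real.log_div ha.ne' ht.ne']
  linarith

theorem isMinOn_weightedPoissonKL_Ioi (ha : 0 < a) (hθ : 0 < θ) :
    IsMinOn (weightedPoissonKL a θ) (Ioi 0) (a / θ) := isMinOn_iff.2 fun t ht => by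
  have h := weightedPoissonKL_tangent_le (θ := θ) ha (div_pos ha hθ) ht
  rwa [div_div_cancel₀ ha.ne', sub_self, zero_mul, add_zero] at h

theorem isMinOn_weightedPoissonKL_Ioc (ha : 0 < a) (hT : θ * T ≤ a) :
    IsMinOn (weightedPoissonKL a θ) (Ioc 0 T) T := isMinOn_iff.2 fun t ⟨ht, htT⟩ => by
  have hT0 : 0 < T := ht.trans_le htT
  have hslope : θ - a / T ≤ 0 := sub_nonpos.2 ((le_div_iff₀ hT0).2 hT)
  calc weightedPoissonKL a θ T
      ≤ weightedPoissonKL a θ T + (θ - a / T) * (t - T) :=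
        le_add_of_nonneg_right (mul_nonneg_of_nonpos_of_nonpos hslope (sub_nonpos.2 htT))
    _ ≤ weightedPoissonKL a θ t := weightedPoissonKL_tangent_le ha hT0 ht

end WeightedPoissonKL

section PoissonKL

open Set

variable {ι : Type*} [Fintype ι] {w μ : ι → ℝ} {a c W x : ℝ} {i M : ι}

/-- The Kullback–Leibler divergence `D(Poi(a·eᵢ)‖Poi(μ))` between multivariate Poisson
distributions, the first of which has intensity `a` concentrated in coordinate `i`. -/
noncomputable def poissonKL (a : ℝ) (i : ι) (μ : ι → ℝ) : ℝ :=
  (∑ j, μ j) - a + a * Real.log (a / μ i)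

/-- The intensity vectors `μ ≥ 0` on the hyperplane `∑ j, w j * μ j = c` for which
`D(Poi(a·eᵢ)‖Poi(μ))` is finite; `0 < μ i` excludes the junk value of `log (a / 0)`. -/
def feasibleIntensities (w : ι → ℝ) (c : ℝ) (i : ι) : Set (ι → ℝ) :=
  {μ | (∀ j, 0 ≤ μ j) ∧ 0 < μ i ∧ ∑ j, w j * μ j = c}

theorem mul_le_of_mem_feasibleIntensities (hw : ∀ j, 0 ≤ w j)
    (hμ : μ ∈ feasibleIntensities w c i) : w i * μ i ≤ c := by
  obtain ⟨hμ0, -, rfl⟩ := hμ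
  exact Finset.single_le_sum (f := fun j => w j * μ j)
    (fun j _ => mul_nonneg (hw j) (hμ0 j)) (Finset.mem_univ i)

theorem div_add_mul_le_sum_of_mem_feasibleIntensities (hW : 0 < W) (hwW : ∀ j, w j ≤ W)
    (hμ : μ ∈ feasibleIntensities w c i) : c / W + (W - w i) / W * μ i ≤ ∑ j, μ j := by
  obtain ⟨hμ0, -, rfl⟩ := hμ
  have hslack : (W - w i) * μ i ≤ ∑ j, (W - w j) * μ j :=
    Finset.single_le_sum (f := fun j => (W - w j) * μ j)
      (fun j _ => mul_nonneg (sub_nonneg.2 (hwW j)) (hμ0 j)) (Finset.mem_univ i)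
  simp only [sub_mul, Finset.sum_sub_distrib, ← Finset.mul_sum] at hslack
  rw [div_mul_eq_mul_div, ← add_div, div_le_iff₀ hW]
  linarith

theorem div_add_weightedPoissonKL_le_poissonKL (hW : 0 < W) (hwW : ∀ j, w j ≤ W)
    (hμ : μ ∈ feasibleIntensities w c i) :
    c / W + weightedPoissonKL a ((W - w i) / W) (μ i) ≤ poissonKL a i μ := by
  have hsum := div_add_mul_le_sum_of_mem_feasibleIntensities hW hwW hμ
  simp only [weightedPoissonKL, poissonKL]
  linarith

theorem exists_poissonKL_eq_div_add_weightedPoissonKL (hM : 0 < w M) (hx : 0 < x)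
    (hxc : w i * x ≤ c) (hMi : M = i → w i * x = c) :
    ∃ μ ∈ feasibleIntensities w c i,
      poissonKL a i μ = c / w M + weightedPoissonKL a ((w M - w i) / w M) x := by
  classical
  set r : ℝ := (c - w i * x) / w M with hr
  have hr0 : 0 ≤ r := div_nonneg (sub_nonneg.2 hxc) hM.le
  have hμi : (Pi.single i x + Pi.single M r : ι → ℝ) i = x := by
    rcases eq_or_ne M i with rfl | hne
    · simp [hr, hMi rfl]
    · simp [hne.symm]
  have hμ0 : (0 : ι → ℝ) ≤ Pi.single i x + Pi.single M r :=
    add_nonneg (Pi.single_nonneg.2 hx.le) (Pi.single_nonneg.2 hr0)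
  refine ⟨Pi.single i x + Pi.single M r, ⟨hμ0, hμi.symm ▸ hx, ?_⟩, ?_⟩
  · change w ⬝ᵥ (Pi.single i x + Pi.single M r) = c
    rw [dotProduct_add, dotProduct_single, dotProduct_single, hr, mul_div_cancel₀ _ hM.ne',
      add_sub_cancel]
  · have hsum : ∑ j, (Pi.single i x + Pi.single M r : ι → ℝ) j = x + r := by
      simp [Finset.sum_add_distrib]
    rw [poissonKL, weightedPoissonKL, hμi, hsum, hr]
    field_simp
    ring

theorem isLeast_image_poissonKL_of_isMinOn (hw : ∀ j, 0 ≤ w j) (hwM : ∀ j, w j ≤ w M)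
    (hwi : 0 < w i) (hx : x ∈ Ioc 0 (c / w i)) (hMi : M = i → w i * x = c)
    (hmin : IsMinOn (weightedPoissonKL a ((w M - w i) / w M)) (Ioc 0 (c / w i)) x) :
    IsLeast (poissonKL a i '' feasibleIntensities w c i)
      (c / w M + weightedPoissonKL a ((w M - w i) / w M) x) := by
  have hM : 0 < w M := hwi.trans_le (hwM i)
  refine ⟨exists_poissonKL_eq_div_add_weightedPoissonKL hM hx.1 ((le_div_iff₀' hwi).1 hx.2) hMi,
    forall_mem_image.2 fun μ hμ => ?_⟩
  have hμi : μ i ∈ Ioc 0 (c / w i) :=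
    ⟨hμ.2.1, (le_div_iff₀' hwi).2 (mul_le_of_mem_feasibleIntensities hw hμ)⟩
  exact (add_le_add_right (isMinOn_iff.1 hmin _ hμi) _).trans
    (div_add_weightedPoissonKL_le_poissonKL hM hwM hμ)

theorem isLeast_image_poissonKL_of_le (hw : ∀ j, 0 ≤ w j) (hwM : ∀ j, w j ≤ w M)
    (hwi : 0 < w i) (hc : 0 < c) (ha : 0 < a) (hca : c * (w M - w i) / (w M * w i) ≤ a) :
    IsLeast (poissonKL a i '' feasibleIntensities w c i)
      (c / w i - a + a * Real.log (a * w i / c)) := by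
  have hM : 0 < w M := hwi.trans_le (hwM i)
  have hθ : (w M - w i) / w M * (c / w i) ≤ a := by
    rwa [div_mul_div_comm, mul_comm (w M - w i)]
  have hval : c / w M + weightedPoissonKL a ((w M - w i) / w M) (c / w i) =
      c / w i - a + a * Real.log (a * w i / c) := by
    rw [weightedPoissonKL, div_div_eq_mul_div]
    field_simp
    ring
  exact hval ▸ isLeast_image_poissonKL_of_isMinOn hw hwM hwi ⟨div_pos hc hwi, le_rfl⟩
    (fun _ => mul_div_cancel₀ c hwi.ne') (isMinOn_weightedPoissonKL_Ioc ha hθ)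

theorem isLeast_image_poissonKL_of_lt (hw : ∀ j, 0 ≤ w j) (hwM : ∀ j, w j ≤ w M)
    (hwi : 0 < w i) (ha : 0 < a) (hac : a < c * (w M - w i) / (w M * w i)) :
    IsLeast (poissonKL a i '' feasibleIntensities w c i)
      (c / w M + a * Real.log ((w M - w i) / w M)) := by
  have hM : 0 < w M := hwi.trans_le (hwM i)
  have hne : w i ≠ w M := by
    intro h
    rw [h, sub_self, mul_zero, zero_div] at hac
    exact hac.not_gt ha
  have hθ : 0 < (w M - w i) / w M := div_pos (sub_pos.2 ((hwM i).lt_of_ne hne)) hM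
  have hx : a / ((w M - w i) / w M) ≤ c / w i := by
    rw [div_le_iff₀ hθ, div_mul_div_comm, mul_comm (w i)]
    exact hac.le
  rw [← weightedPoissonKL_div_self ha.ne' hθ.ne']
  exact isLeast_image_poissonKL_of_isMinOn hw hwM hwi ⟨div_pos ha hθ, hx⟩
    (fun h => absurd (congrArg w h.symm) hne)
    ((isMinOn_weightedPoissonKL_Ioi ha hθ).on_subset Ioc_subset_Ioi_self)

theorem image_poissonKL_feasibleIntensities :
    poissonKL a i '' feasibleIntensities w c i =
      {y | ∃ μ : ι → ℝ, (∀ j, 0 ≤ μ j) ∧ 0 < μ i ∧ (∑ j, w j * μ j) = c ∧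
        y = (∑ j, μ j) - a + a * Real.log (a / μ i)} := by
  ext y
  simp only [mem_image, feasibleIntensities, poissonKL, mem_ofPred_eq, and_assoc, eq_comm (b := y)]

end PoissonKL

theorem stmt15_general {ι : Type*} [Fintype ι] (w : ι → ℝ) (hw : ∀ j, 0 ≤ w j)
    (wM : ℝ) (hwM : IsGreatest (Set.range w) wM) (c₀ : ℝ) (hc₀ : 0 < c₀)
    (i : ι) (hwi : 0 < w i) (a : ℝ) (ha : 0 < a) :
    IsLeast {y : ℝ | ∃ μ' : ι → ℝ, (∀ j, 0 ≤ μ' j) ∧ 0 < μ' i ∧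
        (∑ j, w j * μ' j) = c₀ ∧
        y = (∑ j, μ' j) - a + a * Real.log (a / μ' i)}
      (if c₀ * (wM - w i) / (wM * w i) ≤ a then
        c₀ / w i - a + a * Real.log (a * w i / c₀)
      else
        c₀ / wM + a * Real.log ((wM - w i) / wM)) := by
  obtain ⟨⟨M, rfl⟩, hub⟩ := hwM
  have hle : ∀ j, w j ≤ w M := Set.forall_mem_range.1 hub
  rw [← image_poissonKL_feasibleIntensities]
  split_ifs with hcase
  · exact isLeast_image_poissonKL_of_le hw hle hwi hc₀ ha hcase
  · exact isLeast_image_poissonKL_of_lt hw hle hwi ha (not_le.1 hcase)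

open Finset in
/-- Minimization of the Kullback–Leibler divergence
`D(Poi(a·eᵢ)‖Poi(μ′)) = Σⱼ μ′ⱼ − a + a·log(a/μ′ᵢ)` over intensity vectors `μ′ ≥ 0` with
`μ′ᵢ > 0` on the hyperplane `Σⱼ wⱼ·μ′ⱼ = c₀`: the infimum is attained and equals
`c₀/wᵢ − a + a·log(a·wᵢ/c₀)` when `a ≥ c₀(w_M − wᵢ)/(w_M·wᵢ)`, and
`c₀/w_M + a·log((w_M − wᵢ)/w_M)` otherwise, where `w_M = maxⱼ wⱼ`. -/
theorem stmt15 (m : ℕ) (hm : 0 < m) (w : Fin m → ℝ) (hw : ∀ j, 0 < w j)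
    (wM : ℝ) (hwM : IsGreatest (Set.range w) wM)
    (c₀ : ℝ) (hc₀ : 0 < c₀) (i : Fin m) (a : ℝ) (ha : 0 < a)
    (hai : w i * a < c₀) :
    IsLeast {y : ℝ | ∃ μ' : Fin m → ℝ, (∀ j, 0 ≤ μ' j) ∧ 0 < μ' i ∧
        (∑ j, w j * μ' j) = c₀ ∧
        y = (∑ j, μ' j) - a + a * Real.log (a / μ' i)}
      (if c₀ * (wM - w i) / (wM * w i) ≤ a then
        c₀ / w i - a + a * Real.log (a * w i / c₀)
      else
        c₀ / wM + a * Real.log ((wM - w i) / wM)) :=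
  stmt15_general w (fun j => (hw j).le) wM hwM c₀ hc₀ i (hw i) a ha
end

section
/- Let m be a positive integer, w : {1,…,m} → (0,∞), c₀ > 0, let p : {1,…,m} → [0,1] with Σᵢ pᵢ = 1, and let a : {1,…,m} → (0,∞). For ν : {1,…,m} → [0,∞) and μ : {1,…,m} → (0,∞) define d(ν, μ) = Σⱼ (μⱼ − νⱼ) + Σⱼ νⱼ·log(νⱼ/μⱼ), with the convention 0·log 0 = 0. Then inf{ d((pⱼ·aⱼ)ⱼ, μ′) : μ′ⱼ > 0 for all j, Σⱼ wⱼ·μ′ⱼ = c₀ } ≤ Σᵢ pᵢ · inf{ d(aᵢ·eᵢ, μ′) : μ′ⱼ > 0 for all j, Σⱼ wⱼ·μ′ⱼ = c₀ }, where aᵢ·eᵢ denotes the vector whose i-th entry is aᵢ and whose other entries are 0. -/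
open Finset in
/-- The (generalized) Kullback–Leibler divergence `D(Poi(ν)‖Poi(μ))` between multivariate
Poisson distributions, `Σⱼ (μⱼ − νⱼ) + Σⱼ νⱼ·log(νⱼ/μⱼ)` (with the convention
`0·log 0 = 0`, which holds automatically since `Real.log 0 = 0`). -/
noncomputable def klPoisson (m : ℕ) (ν μ : Fin m → ℝ) : ℝ :=
  (∑ j, (μ j - ν j)) + ∑ j, ν j * Real.log (ν j / μ j)

/-!
`D(Poi(ν)‖Poi(μ))` is the sum over the coordinates of `μⱼ · klFun (νⱼ / μⱼ)`, the perspective of a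
convex function, so it is jointly convex in `(ν, μ)`. Minimizing a jointly convex function over `μ`
in a fixed convex set leaves a convex function of `ν`, and the vector `(pⱼ aⱼ)ⱼ` is the mixture
`∑ᵢ pᵢ • (aᵢ eᵢ)`, so the inequality is Jensen's.
-/

open InformationTheory Set
open scoped Pointwise

lemma inv_smul_add_smul {𝕜 E : Type*} [Field 𝕜] [AddCommMonoid E] [Module 𝕜 E] {t u : 𝕜}
    (ht : t ≠ 0) (hu : u ≠ 0) (a b : 𝕜) (x y : E) :
    (a * t + b * u)⁻¹ • (a • x + b • y) =
      (a * t / (a * t + b * u)) • t⁻¹ • x + (b * u / (a * t + b * u)) • u⁻¹ • y := by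
  match_scalars <;> field_simp

section Perspective

variable {𝕜 E β : Type*} [Field 𝕜] [AddCommMonoid E] [Module 𝕜 E] [AddCommMonoid β] [Module 𝕜 β]

variable (𝕜) in
/-- The perspective `(x, t) ↦ t f(x / t)` of a function `f`, used to derive joint convexity of a
divergence from convexity of `f`. It is meaningful only for `t ≠ 0`: at `t = 0` it takes the
value `0`. -/
def perspective (f : E → β) (q : E × 𝕜) : β :=
  q.2 • f (q.2⁻¹ • q.1)

variable [LinearOrder 𝕜]

variable (𝕜) in
/-- The domain `{(x, t) | 0 < t, x / t ∈ s}` on which the perspective of a convex function on `s`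
is convex. -/
def perspectiveDomain (s : Set E) : Set (E × 𝕜) :=
  {q | 0 < q.2 ∧ q.2⁻¹ • q.1 ∈ s}

variable [IsStrictOrderedRing 𝕜]

lemma convex_perspectiveDomain {s : Set E} (hs : Convex 𝕜 s) :
    Convex 𝕜 (perspectiveDomain 𝕜 s) := by
  rintro ⟨x, t⟩ ⟨ht, hx⟩ ⟨y, u⟩ ⟨hu, hy⟩ a b ha hb hab
  dsimp only at ht hx hu hy
  have hpos : 0 < a * t + b * u := convex_Ioi (𝕜 := 𝕜) 0 ht hu ha hb hab
  refine ⟨hpos, ?_⟩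
  change (a * t + b * u)⁻¹ • (a • x + b • y) ∈ s
  rw [inv_smul_add_smul ht.ne' hu.ne']
  exact hs hx hy (by positivity) (by positivity) (by rw [← add_div, div_self hpos.ne'])

theorem convexOn_perspective [PartialOrder β] [PosSMulMono 𝕜 β] {s : Set E} {f : E → β}
    (hf : ConvexOn 𝕜 s f) : ConvexOn 𝕜 (perspectiveDomain 𝕜 s) (perspective 𝕜 f) := by
  refine ⟨convex_perspectiveDomain hf.1, ?_⟩
  rintro ⟨x, t⟩ ⟨ht, hx⟩ ⟨y, u⟩ ⟨hu, hy⟩ a b ha hb hab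
  dsimp only at ht hx hu hy
  have hpos : 0 < a * t + b * u := convex_Ioi (𝕜 := 𝕜) 0 ht hu ha hb hab
  set r := a * t + b * u
  calc r • f (r⁻¹ • (a • x + b • y))
      = r • f ((a * t / r) • t⁻¹ • x + (b * u / r) • u⁻¹ • y) := by
        rw [inv_smul_add_smul ht.ne' hu.ne']
    _ ≤ r • ((a * t / r) • f (t⁻¹ • x) + (b * u / r) • f (u⁻¹ • y)) := by
        refine smul_le_smul_of_nonneg_left ?_ hpos.le
        exact hf.2 hx hy (by positivity) (by positivity) (by rw [← add_div, div_self hpos.ne'])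
    _ = a • t • f (t⁻¹ • x) + b • u • f (u⁻¹ • y) := by
        simp only [smul_add, smul_smul, mul_div_cancel₀ _ hpos.ne']

end Perspective

section PartialMinimization

variable {E F : Type*} [AddCommMonoid E] [Module ℝ E] [AddCommMonoid F] [Module ℝ F]

theorem convexOn_sInf_image {f : E → F → ℝ} {s : Set E} {C : Set F}
    (hf : ConvexOn ℝ (s ×ˢ C) (Function.uncurry f)) (hC : C.Nonempty)
    (hbdd : ∀ x ∈ s, BddBelow (f x '' C)) : ConvexOn ℝ s fun x => sInf (f x '' C) := by
  have hs : Convex ℝ s := by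
    simpa only [LinearMap.coe_fst, fst_image_prod s hC] using hf.1.linear_image (.fst ℝ E F)
  refine ⟨hs, fun x hx y hy a b ha hb hab => ?_⟩
  have hmin : a • sInf (f x '' C) + b • sInf (f y '' C) = sInf (a • f x '' C + b • f y '' C) := by
    rw [csInf_add (hC.image _).smul_set ((hbdd x hx).smul_of_nonneg ha) (hC.image _).smul_set
      ((hbdd y hy).smul_of_nonneg hb), Real.sInf_smul_of_nonneg ha, Real.sInf_smul_of_nonneg hb]
  rw [hmin]
  refine le_csInf ((hC.image _).smul_set.add (hC.image _).smul_set) ?_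
  rintro _ ⟨_, ⟨_, ⟨u, hu, rfl⟩, rfl⟩, _, ⟨_, ⟨v, hv, rfl⟩, rfl⟩, rfl⟩
  have hxu : (x, u) ∈ s ×ˢ C := ⟨hx, hu⟩
  have hyv : (y, v) ∈ s ×ˢ C := ⟨hy, hv⟩
  have hmem := hf.1 hxu hyv ha hb hab
  calc sInf (f (a • x + b • y) '' C)
      ≤ f (a • x + b • y) (a • u + b • v) :=
        csInf_le (hbdd _ hmem.1) (mem_image_of_mem _ hmem.2)
    _ ≤ a • f x u + b • f y v := hf.2 hxu hyv ha hb hab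

end PartialMinimization

theorem convexOn_finset_sum {𝕜 E β ι : Type*} [Semiring 𝕜] [PartialOrder 𝕜] [AddCommMonoid E]
    [SMul 𝕜 E] [AddCommMonoid β] [PartialOrder β] [IsOrderedAddMonoid β] [Module 𝕜 β]
    {s : Set E} (hs : Convex 𝕜 s) {t : Finset ι} {f : ι → E → β}
    (hf : ∀ i ∈ t, ConvexOn 𝕜 s (f i)) : ConvexOn 𝕜 s fun x => ∑ i ∈ t, f i x := by
  refine ⟨hs, fun x hx y hy a b ha hb hab => ?_⟩
  simp only [Finset.smul_sum, ← Finset.sum_add_distrib]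
  exact Finset.sum_le_sum fun i hi => (hf i hi).2 hx hy ha hb hab

section KLPoisson

variable {m : ℕ}

lemma klPoisson_eq_sum_perspective (ν : Fin m → ℝ) {μ : Fin m → ℝ} (hμ : ∀ j, μ j ≠ 0) :
    klPoisson m ν μ = ∑ j, perspective ℝ klFun (ν j, μ j) := by
  rw [klPoisson, ← Finset.sum_add_distrib]
  refine Finset.sum_congr rfl fun j _ => ?_
  have hμj := hμ j
  simp only [perspective, klFun_apply, smul_eq_mul, inv_mul_eq_div]
  field_simp
  ring

lemma klPoisson_nonneg {ν μ : Fin m → ℝ} (hν : 0 ≤ ν) (hμ : ∀ j, 0 < μ j) :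
    0 ≤ klPoisson m ν μ := by
  rw [klPoisson_eq_sum_perspective ν fun j => (hμ j).ne']
  exact Finset.sum_nonneg fun j _ => mul_nonneg (hμ j).le <|
    klFun_nonneg <| mul_nonneg (inv_nonneg.2 (hμ j).le) (hν j)

theorem convexOn_klPoisson :
    ConvexOn ℝ (Ici 0 ×ˢ univ.pi fun _ => Ioi 0) (Function.uncurry (klPoisson m)) := by
  have hconv : Convex ℝ (Ici (0 : Fin m → ℝ) ×ˢ univ.pi fun _ : Fin m => Ioi (0 : ℝ)) :=
    (convex_Ici 0).prod (convex_pi fun _ _ => convex_Ioi 0)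
  refine (convexOn_finset_sum (t := Finset.univ) hconv fun j _ => ?_).congr
    fun q hq => (klPoisson_eq_sum_perspective q.1 fun j => (hq.2 j trivial).ne').symm
  let coord : (Fin m → ℝ) × (Fin m → ℝ) →ₗ[ℝ] ℝ × ℝ :=
    (LinearMap.proj j).prodMap (LinearMap.proj j)
  exact ((convexOn_perspective convexOn_klFun).comp_linearMap coord).subset
    (fun q hq => ⟨hq.2 j trivial, mul_nonneg (inv_nonneg.2 (hq.2 j trivial).le) (hq.1 j)⟩) hconv

theorem convexOn_sInf_klPoisson {C : Set (Fin m → ℝ)} (hC : Convex ℝ C) (hne : C.Nonempty)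
    (hpos : ∀ μ ∈ C, ∀ j, 0 < μ j) : ConvexOn ℝ (Ici 0) fun ν => sInf (klPoisson m ν '' C) :=
  convexOn_sInf_image
    (convexOn_klPoisson.subset (prod_mono_right fun μ hμ j _ => hpos μ hμ j)
      ((convex_Ici 0).prod hC))
    hne fun _ hν => ⟨0, forall_mem_image.2 fun μ hμ => klPoisson_nonneg hν (hpos μ hμ)⟩

end KLPoisson

section PosHyperplane

variable {ι : Type*} [Fintype ι]

/-- The positive vectors `μ` of total cost `∑ⱼ wⱼ μⱼ = c`, the set over which the divergence is
minimized. -/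
def posHyperplane (w : ι → ℝ) (c : ℝ) : Set (ι → ℝ) :=
  (univ.pi fun _ => Ioi 0) ∩ {μ | ∑ j, w j * μ j = c}

lemma convex_posHyperplane (w : ι → ℝ) (c : ℝ) : Convex ℝ (posHyperplane w c) :=
  (convex_pi fun _ _ => convex_Ioi 0).inter
    (convex_hyperplane ⟨dotProduct_add w, fun r => dotProduct_smul r w⟩ c)

lemma posHyperplane_nonempty [Nonempty ι] {w : ι → ℝ} (hw : ∀ j, 0 < w j) {c : ℝ} (hc : 0 < c) :
    (posHyperplane w c).Nonempty := by
  have hcard : (0 : ℝ) < Fintype.card ι := Nat.cast_pos.2 Fintype.card_pos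
  refine ⟨fun j => c / Fintype.card ι / w j, fun j _ => div_pos (div_pos hc hcard) (hw j), ?_⟩
  simp only [mem_ofPred_eq, mul_div_cancel₀ _ (hw _).ne', Finset.sum_const, Finset.card_univ,
    nsmul_eq_mul]
  exact mul_div_cancel₀ c hcard.ne'

end PosHyperplane

lemma image_klPoisson_posHyperplane {m : ℕ} (w : Fin m → ℝ) (c : ℝ) (ν : Fin m → ℝ) :
    klPoisson m ν '' posHyperplane w c =
      {y | ∃ μ : Fin m → ℝ, (∀ j, 0 < μ j) ∧ ∑ j, w j * μ j = c ∧ y = klPoisson m ν μ} := by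
  ext y
  simp only [posHyperplane, mem_image, mem_inter_iff, mem_univ_pi, mem_Ioi,
    mem_ofPred_eq, and_assoc, eq_comm (b := y)]

theorem stmt16_general {ι : Type*} [Fintype ι] {m : ℕ} {C : Set (Fin m → ℝ)} (hC : Convex ℝ C)
    (hne : C.Nonempty) (hpos : ∀ μ ∈ C, ∀ j, 0 < μ j) {p : ι → ℝ} (hp : ∀ i, 0 ≤ p i)
    (hps : ∑ i, p i = 1) {ν : ι → Fin m → ℝ} (hν : ∀ i, 0 ≤ ν i) :
    sInf (klPoisson m (∑ i, p i • ν i) '' C) ≤ ∑ i, p i * sInf (klPoisson m (ν i) '' C) :=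
  (convexOn_sInf_klPoisson hC hne hpos).map_sum_le (fun i _ => hp i) hps fun i _ => hν i

open Finset in
/-- The constrained infimum of `D(Poi(ν)‖Poi(·))` over the hyperplane
`Σⱼ wⱼ·μ′ⱼ = c₀` evaluated at the mixture `ν = (pⱼ·aⱼ)ⱼ` is at most the corresponding
`p`-mixture of the infima for the vectors `aᵢ·eᵢ`. -/
theorem stmt16 (m : ℕ) (hm : 0 < m) (w : Fin m → ℝ) (hw : ∀ j, 0 < w j)
    (c₀ : ℝ) (hc₀ : 0 < c₀) (p : Fin m → ℝ) (hp0 : ∀ i, 0 ≤ p i)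
    (hp1 : ∀ i, p i ≤ 1) (hps : ∑ i, p i = 1) (a : Fin m → ℝ)
    (ha : ∀ i, 0 < a i) :
    sInf {y : ℝ | ∃ μ' : Fin m → ℝ, (∀ j, 0 < μ' j) ∧ (∑ j, w j * μ' j) = c₀ ∧
        y = klPoisson m (fun j => p j * a j) μ'} ≤
      ∑ i, p i *
        sInf {y : ℝ | ∃ μ' : Fin m → ℝ, (∀ j, 0 < μ' j) ∧ (∑ j, w j * μ' j) = c₀ ∧
          y = klPoisson m (fun j => if j = i then a i else 0) μ'} := by
  have : Nonempty (Fin m) := ⟨⟨0, hm⟩⟩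
  have hmix : (fun j => p j * a j) = ∑ i, p i • fun j => if j = i then a i else 0 := by
    ext j
    simp
  simp only [hmix, ← image_klPoisson_posHyperplane]
  exact stmt16_general (convex_posHyperplane w c₀) (posHyperplane_nonempty hw hc₀)
    (fun _ hμ j => hμ.1 j trivial) hp0 hps fun i _ => ite_nonneg (ha i).le le_rfl
end

section
/- Let m be a positive integer and let (x₁, y₁), …, (x_m, y_m) be points of ℝ² with yᵢ > 0 for all i. Then the minimum of (x, y) ↦ x/√y over the convex hull of {(x₁,y₁), …, (x_m,y_m)} equals the minimum over all pairs (i, j) of min_{s ∈ [0,1]} (s·xᵢ + (1−s)·xⱼ) / √(s·yᵢ + (1−s)·yⱼ). -/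
/-!
Every point `p` of the convex hull is beaten at its own height: some pair of generating points
spans a segment containing a point `q` with the same second coordinate as `p` and a first
coordinate that is no larger. Otherwise, after translating `p` to the origin, the finitely many
generating points needed to write `p` would all lie strictly on one side of a line through `p`:
the slopes forced by the points below `p` are separated from those forced by the points above `p`
exactly because every crossing segment passes to the right of `p`. So `p` would not be in their
convex hull. At a fixed height `x / √y` increases with `x`, so the infimum over the hull is already
the infimum over the segments.
-/

section LinearOrderedField

variable {𝕜 : Type*} [Field 𝕜] [LinearOrder 𝕜] [IsStrictOrderedRing 𝕜]

theorem exists_forall_mul_lt_of_forall_cross_lt {ι : Type*} {t : Finset ι} {u d : ι → 𝕜}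
    (hzero : ∀ i ∈ t, d i = 0 → 0 < u i)
    (hcross : ∀ i ∈ t, ∀ j ∈ t, d i < 0 → 0 < d j → u j * d i < u i * d j) :
    ∃ l : 𝕜, ∀ i ∈ t, l * d i < u i := by
  classical
  have hsep : ∀ a ∈ (t.filter (d · < 0)).image (fun i => u i / d i),
      ∀ b ∈ (t.filter (0 < d ·)).image (fun i => u i / d i), a < b := by
    simp only [Finset.forall_mem_image, Finset.mem_filter]
    rintro i ⟨hi, hdi⟩ j ⟨hj, hdj⟩
    rw [div_lt_iff_of_neg hdi, div_mul_eq_mul_div, div_lt_iff₀ hdj]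
    exact hcross i hi j hj hdi hdj
  obtain ⟨l, hneg, hpos⟩ := Order.exists_between_finsets _ _ hsep
  simp only [Finset.forall_mem_image, Finset.mem_filter] at hneg hpos
  refine ⟨l, fun i hi => ?_⟩
  rcases lt_trichotomy (d i) 0 with hdi | hdi | hdi
  · exact (div_lt_iff_of_neg hdi).1 (hneg ⟨hi, hdi⟩)
  · simpa only [hdi, mul_zero] using hzero i hi hdi
  · exact (lt_div_iff₀ hdi).1 (hpos ⟨hi, hdi⟩)

variable {E : Type*} [AddCommGroup E] [Module 𝕜 E]

theorem exists_mem_segment_apply_eq (f g : E →ₗ[𝕜] 𝕜) {a b : E} {c : 𝕜}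
    (ha : g a < c) (hb : c < g b) :
    ∃ q ∈ segment 𝕜 a b, g q = c ∧
      (g b - g a) * f q = (g b - c) * f a + (c - g a) * f b := by
  have hab : 0 < g b - g a := sub_pos.2 (ha.trans hb)
  refine ⟨((g b - c) / (g b - g a)) • a + ((c - g a) / (g b - g a)) • b,
    ⟨_, _, div_nonneg (sub_pos.2 hb).le hab.le, div_nonneg (sub_pos.2 ha).le hab.le, ?_, rfl⟩,
    ?_, ?_⟩
  · field_simp
    ring
  · simp only [map_add, map_smul, smul_eq_mul]
    field_simp
    ring
  · simp only [map_add, map_smul, smul_eq_mul]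
    field_simp

theorem notMem_convexHull_of_forall_lt (φ : E →ₗ[𝕜] 𝕜) {s : Set E} {p : E}
    (h : ∀ a ∈ s, φ p < φ a) : p ∉ convexHull 𝕜 s := fun hp =>
  lt_irrefl (φ p) (convexHull_min h (convex_halfSpace_gt φ.isLinear (φ p)) hp)

theorem exists_mem_segment_of_mem_convexHull_finset (f g : E →ₗ[𝕜] 𝕜) {t : Finset E} {p : E}
    (hp : p ∈ convexHull 𝕜 (t : Set E)) :
    ∃ a ∈ t, ∃ b ∈ t, ∃ q ∈ segment 𝕜 a b, g q = g p ∧ f q ≤ f p := by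
  by_contra! hlt
  have hzero : ∀ a ∈ t, g a - g p = 0 → 0 < f a - f p := fun a ha h =>
    sub_pos.2 (hlt a ha a ha a (left_mem_segment 𝕜 a a) (sub_eq_zero.1 h))
  have hcross : ∀ a ∈ t, ∀ b ∈ t, g a - g p < 0 → 0 < g b - g p →
      (f b - f p) * (g a - g p) < (f a - f p) * (g b - g p) := by
    intro a ha b hb hga hgb
    obtain ⟨q, hq, hgq, hfq⟩ :=
      exists_mem_segment_apply_eq f g (sub_neg.1 hga) (sub_pos.1 hgb)
    have hpq : (g b - g a) * f p < (g b - g a) * f q :=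
      mul_lt_mul_of_pos_left (hlt a ha b hb q hq hgq) (by linarith)
    linarith
  obtain ⟨l, hl⟩ := exists_forall_mul_lt_of_forall_cross_lt hzero hcross
  refine notMem_convexHull_of_forall_lt (f - l • g) (fun a ha => ?_) hp
  have hla := hl a ha
  simp only [LinearMap.sub_apply, LinearMap.smul_apply, smul_eq_mul]
  linarith

theorem exists_mem_segment_of_mem_convexHull (f g : E →ₗ[𝕜] 𝕜) {s : Set E} {p : E}
    (hp : p ∈ convexHull 𝕜 s) :
    ∃ a ∈ s, ∃ b ∈ s, ∃ q ∈ segment 𝕜 a b, g q = g p ∧ f q ≤ f p := by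
  rw [convexHull_eq_union_convexHull_finite_subsets] at hp
  obtain ⟨t, hts, hpt⟩ := Set.mem_iUnion₂.1 hp
  obtain ⟨a, ha, b, hb, hq⟩ := exists_mem_segment_of_mem_convexHull_finset f g hpt
  exact ⟨a, hts ha, b, hts hb, hq⟩

theorem smul_add_one_sub_smul_mem_convexHull_range {ι : Type*} (z : ι → E) (i j : ι)
    (s : Set.Icc (0 : 𝕜) 1) :
    (s : 𝕜) • z i + (1 - (s : 𝕜)) • z j ∈ convexHull 𝕜 (Set.range z) :=
  segment_subset_convexHull (Set.mem_range_self i) (Set.mem_range_self j)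
    ⟨s, 1 - s, s.2.1, sub_nonneg.2 s.2.2, add_sub_cancel _ _, rfl⟩

theorem stmt18_general {ι α : Type*} [ConditionallyCompleteLinearOrder α] (f g : E →ₗ[𝕜] 𝕜)
    (z : ι → E) (F : E → α)
    (hF : ∀ p ∈ convexHull 𝕜 (Set.range z), ∀ q ∈ convexHull 𝕜 (Set.range z),
      g q = g p → f q ≤ f p → F q ≤ F p)
    (hbdd : BddBelow (F '' convexHull 𝕜 (Set.range z))) :
    sInf {v : α | ∃ p ∈ convexHull 𝕜 (Set.range z), v = F p} =
      ⨅ i, ⨅ j, ⨅ s : Set.Icc (0 : 𝕜) 1, F ((s : 𝕜) • z i + (1 - (s : 𝕜)) • z j) := by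
  let G : ι × ι × Set.Icc (0 : 𝕜) 1 → α := fun r =>
    F ((r.2.2 : 𝕜) • z r.1 + (1 - (r.2.2 : 𝕜)) • z r.2.1)
  have hmem : ∀ r, ∃ p ∈ convexHull 𝕜 (Set.range z), G r = F p := fun r =>
    ⟨_, smul_add_one_sub_smul_mem_convexHull_range z r.1 r.2.1 r.2.2, rfl⟩
  have hG : BddBelow (Set.range G) := hbdd.mono <| by
    rintro _ ⟨r, rfl⟩
    obtain ⟨p, hp, hpr⟩ := hmem r
    exact ⟨p, hp, hpr.symm⟩
  have hattained : ∀ p ∈ convexHull 𝕜 (Set.range z), ∃ r, G r ≤ F p := by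
    intro p hp
    obtain ⟨_, ⟨i, rfl⟩, _, ⟨j, rfl⟩, q, ⟨s, s', hs, hs', hss', rfl⟩, hg, hf⟩ :=
      exists_mem_segment_of_mem_convexHull f g hp
    obtain rfl : s' = 1 - s := eq_sub_of_add_eq' hss'
    let s₀ : Set.Icc (0 : 𝕜) 1 := ⟨s, hs, sub_nonneg.1 hs'⟩
    exact ⟨(i, j, s₀), hF p hp _ (smul_add_one_sub_smul_mem_convexHull_range z i j s₀) hg hf⟩
  calc sInf {v : α | ∃ p ∈ convexHull 𝕜 (Set.range z), v = F p}
      = ⨅ r, G r := by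
        refine csInf_eq_csInf_of_forall_exists_le ?_ ?_
        · rintro _ ⟨p, hp, rfl⟩
          simpa only [Set.exists_range_iff] using hattained p hp
        · rintro _ ⟨r, rfl⟩
          exact ⟨G r, hmem r, le_rfl⟩
    _ = ⨅ i, ⨅ r, G (i, r) := ciInf_prod hG
    _ = ⨅ i, ⨅ j, ⨅ s, G (i, j, s) :=
        iInf_congr fun i => ciInf_prod (hG.mono (Set.range_comp_subset_range (Prod.mk i) G))

end LinearOrderedField

theorem convexHull_subset_setOf_snd_pos {s : Set (ℝ × ℝ)} (hs : ∀ p ∈ s, 0 < p.2) :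
    convexHull ℝ s ⊆ {p | 0 < p.2} :=
  convexHull_min hs (convex_halfSpace_gt (LinearMap.snd ℝ ℝ ℝ).isLinear 0)

theorem bddBelow_image_div_sqrt_convexHull {s : Set (ℝ × ℝ)} (hfin : s.Finite)
    (hs : ∀ p ∈ s, 0 < p.2) :
    BddBelow ((fun p : ℝ × ℝ => p.1 / √p.2) '' convexHull ℝ s) :=
  (hfin.isCompact_convexHull ℝ).bddBelow_image <|
    ContinuousOn.div (by fun_prop) (by fun_prop) fun _ hp =>
      (Real.sqrt_pos.2 (convexHull_subset_setOf_snd_pos hs hp)).ne'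

theorem div_sqrt_le_div_sqrt_of_snd_eq {p q : ℝ × ℝ} (hsnd : q.2 = p.2) (hfst : q.1 ≤ p.1) :
    q.1 / √q.2 ≤ p.1 / √p.2 :=
  hsnd ▸ div_le_div_of_nonneg_right hfst (Real.sqrt_nonneg q.2)

/-- For points `(x₁,y₁), …, (x_m,y_m)` of `ℝ²` with all `yᵢ > 0`, the
minimum of `(x,y) ↦ x/√y` over their convex hull equals the minimum over all pairs `(i,j)`
of `min_{s ∈ [0,1]} (s·xᵢ + (1−s)·xⱼ)/√(s·yᵢ + (1−s)·yⱼ)`. -/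
theorem stmt18 (m : ℕ) (hm : 0 < m) (x y : Fin m → ℝ) (hy : ∀ i, 0 < y i) :
    sInf {v : ℝ | ∃ p ∈ convexHull ℝ (Set.range fun i => (x i, y i)),
        v = p.1 / Real.sqrt p.2} =
      ⨅ i : Fin m, ⨅ j : Fin m, ⨅ s : Set.Icc (0 : ℝ) 1,
        ((s : ℝ) * x i + (1 - (s : ℝ)) * x j) /
          Real.sqrt ((s : ℝ) * y i + (1 - (s : ℝ)) * y j) :=
  stmt18_general (LinearMap.fst ℝ ℝ ℝ) (LinearMap.snd ℝ ℝ ℝ) (fun i => (x i, y i))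
    (fun p => p.1 / √p.2) (fun _ _ _ _ => div_sqrt_le_div_sqrt_of_snd_eq)
    (bddBelow_image_div_sqrt_convexHull (Set.finite_range _) (Set.forall_mem_range.2 hy))
end
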